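/- arXiv:2604.20187 — 2 statements merged into one kernel-verified Lean document; each statement's English description precedes it below -/
import Mathlib

section
/- Let k > 0 and R > 0. For x, y ∈ ℝ³ with x ≠ y write Φ(x,y) := e^{ik|x−y|}/(4π|x−y|) and j₀(s) := sin(s)/s. For y, z in the open ball B_R(0) ⊂ ℝ³ define I(y,z) := ∫_{∂B_R(0)} Φ(x,y) · D_ν[x ↦ j₀(k|x−z|)](x) ds(x), where D_ν denotes the directional derivative along the outward unit normal ν_x = x/R of the sphere ∂B_R(0) and ds is the surface measure on ∂B_R(0). Then the reciprocity relation I(y,z) = I(z,y) holds for all y, z ∈ B_R(0). -/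
open MeasureTheory Real Filter
open scoped RealInnerProductSpace Topology

/-!
Write `K_c(x) = e^{c‖x‖}/‖x‖`, so that `Φ` is `K_{ik}` up to a constant and `j₀(k‖x‖)` is a linear
combination of `K_{ik}` and `K_{-ik}`. Up to constants, `I(y, z)` is then a combination of
derivatives in `ρ`, at `ρ = R`, of `T(y, z) = ∫ K_c(Rω - y) K_d(ρω - z) dσ(ω)`, and it suffices that
`T` is symmetric.

In dimension three `T` solves the Helmholtz equation in each variable, and it is invariant under
rotating `y` and `z` simultaneously. Any such `T` is symmetric. If `‖y‖ = ‖z‖`, then a reflection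
exchanges `y` and `z`. So for fixed `y` the difference `T(y, z) - T(z, y)` vanishes on the sphere
`‖z‖ = ‖y‖`; for small `‖y‖` the maximum principle makes it vanish inside that sphere, and real
analyticity carries the vanishing to the whole ball.

Analyticity of `T` comes from viewing `z ↦ K_d(ρ · - z)` as a map into the Banach algebra of
continuous functions on the sphere: it is composed from the exponential, the inverse and the square
root of that algebra, and the square root is analytic as the local inverse of squaring.
-/

open InnerProductSpace Metric Module
open scoped Laplacian

section Laplacian

variable {E F : Type*} [NormedAddCommGroup E] [NormedAddCommGroup F] [NormedSpace ℝ F]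

lemma deriv_deriv_nonpos_of_isLocalMax {f : ℝ → ℝ} {a : ℝ} (hf : ContinuousAt f a)
    (hmax : IsLocalMax f a) : deriv (deriv f) a ≤ 0 := by
  by_contra! hpos
  have hmin : IsLocalMin f a := isLocalMin_of_deriv_deriv_pos hpos hmax.deriv_eq_zero hf
  have hconst : f =ᶠ[𝓝 a] fun _ => f a := by
    filter_upwards [hmax, hmin] with t ht_le ht_ge using le_antisymm ht_le ht_ge
  have hzero : deriv (deriv f) a = 0 := by simp [hconst.deriv.deriv_eq]
  exact hpos.ne' hzero

lemma iteratedFDeriv_two_self_eq_deriv_deriv [NormedSpace ℝ E] {f : E → F} {x : E}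
    (hf : ContDiffAt ℝ 2 f x) (v : E) :
    iteratedFDeriv ℝ 2 f x (fun _ => v) = deriv (deriv fun t : ℝ => f (x + t • v)) 0 := by
  have hbase : Tendsto (fun t : ℝ => x + t • v) (𝓝 0) (𝓝 x) :=
    Continuous.tendsto' (by fun_prop) _ _ (by simp)
  have hfirst : deriv (fun t : ℝ => f (x + t • v)) =ᶠ[𝓝 0]
      fun t => iteratedFDeriv ℝ 1 f (x + t • v) (fun _ => v) := by
    filter_upwards [hbase.eventually (hf.eventually (by simp))] with t ht
    rw [(ht.differentiableAt two_ne_zero).deriv_comp_add_smul, iteratedFDeriv_one_apply]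
  have hsecond := ContDiffAt.deriv_fderiv_add_smul (n := 1) (t := (0 : ℝ)) (y := v)
    (by simpa [one_add_one_eq_two] using hf)
  rw [hfirst.deriv_eq, hsecond, zero_smul, add_zero]

variable [InnerProductSpace ℝ E]

lemma deriv_deriv_comp_norm_add_smul_sq {g : ℝ → F} {x v : E} (hg : ContDiffAt ℝ 2 g (‖x‖ ^ 2)) :
    deriv (deriv fun t : ℝ => g (‖x + t • v‖ ^ 2)) 0 =
      (4 * ⟪x, v⟫ ^ 2) • deriv (deriv g) (‖x‖ ^ 2) + (2 * ‖v‖ ^ 2) • deriv g (‖x‖ ^ 2) := by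
  have hnorm : ∀ t : ℝ, HasDerivAt (fun t : ℝ => ‖x + t • v‖ ^ 2) (2 * ⟪x + t • v, v⟫) t :=
    fun t => by
      have hline : HasDerivAt (fun t : ℝ => x + t • v) v t := by
        simpa using ((hasDerivAt_id' t).smul_const v).const_add x
      simpa using hline.norm_sq
  have hslope : HasDerivAt (fun t : ℝ => 2 * ⟪x + t • v, v⟫) (2 * ‖v‖ ^ 2) 0 := by
    simp only [inner_add_left, inner_smul_left, real_inner_self_eq_norm_sq]
    simpa using (((hasDerivAt_id' (0 : ℝ)).mul_const (‖v‖ ^ 2)).const_add ⟪x, v⟫).const_mul 2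
  have hbase : Tendsto (fun t : ℝ => ‖x + t • v‖ ^ 2) (𝓝 0) (𝓝 (‖x‖ ^ 2)) := by
    simpa using (hnorm 0).continuousAt.tendsto
  have hfirst : deriv (fun t : ℝ => g (‖x + t • v‖ ^ 2)) =ᶠ[𝓝 0]
      fun t => (2 * ⟪x + t • v, v⟫) • deriv g (‖x + t • v‖ ^ 2) := by
    filter_upwards [hbase.eventually (hg.eventually (by simp))] with t ht
    exact ((ht.differentiableAt two_ne_zero).hasDerivAt.scomp t (hnorm t)).deriv
  have hderiv : HasDerivAt (deriv g) (deriv (deriv g) (‖x‖ ^ 2)) (‖x + (0 : ℝ) • v‖ ^ 2) := by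
    rw [zero_smul, add_zero]
    exact ((hg.derivWithin (m := 1) (by norm_num)).differentiableAt one_ne_zero).hasDerivAt
  rw [hfirst.deriv_eq]
  refine (hslope.fun_smul (hderiv.scomp 0 (hnorm 0))).deriv.trans ?_
  simp only [zero_smul, add_zero, Function.comp_apply, smul_smul]
  ring_nf

variable [FiniteDimensional ℝ E]

lemma laplacian_eq_sum_deriv_deriv {ι : Type*} [Fintype ι] (b : OrthonormalBasis ι ℝ E)
    {f : E → F} {x : E} (hf : ContDiffAt ℝ 2 f x) :
    Δ f x = ∑ i, deriv (deriv fun t : ℝ => f (x + t • b i)) 0 := by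
  simp only [laplacian_eq_iteratedFDeriv_orthonormalBasis f b,
    ← iteratedFDeriv_two_self_eq_deriv_deriv hf, Matrix.vec_single_eq_const,
    Matrix.vecCons_const]

lemma laplacian_nonpos_of_isLocalMax {f : E → ℝ} {x : E} (hf : ContDiffAt ℝ 2 f x)
    (hmax : IsLocalMax f x) : Δ f x ≤ 0 := by
  rw [laplacian_eq_sum_deriv_deriv (stdOrthonormalBasis ℝ E) hf]
  refine Finset.sum_nonpos fun i _ => ?_
  have hline : Tendsto (fun t : ℝ => x + t • stdOrthonormalBasis ℝ E i) (𝓝 0) (𝓝 x) :=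
    Continuous.tendsto' (by fun_prop) _ _ (by simp)
  refine deriv_deriv_nonpos_of_isLocalMax ?_ ?_
  · exact ContinuousAt.comp (by simpa using hf.continuousAt) (by fun_prop)
  · simpa [IsLocalMax, IsMaxFilter] using hline.eventually hmax

lemma laplacian_comp_norm_sq {g : ℝ → F} {x : E} (hg : ContDiffAt ℝ 2 g (‖x‖ ^ 2)) :
    Δ (fun x : E => g (‖x‖ ^ 2)) x =
      (4 * ‖x‖ ^ 2) • deriv (deriv g) (‖x‖ ^ 2) + (2 * finrank ℝ E : ℝ) • deriv g (‖x‖ ^ 2) := by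
  have hcomp : ContDiffAt ℝ 2 (fun x : E => g (‖x‖ ^ 2)) x :=
    hg.comp x (contDiff_norm_sq ℝ).contDiffAt
  rw [laplacian_eq_sum_deriv_deriv (stdOrthonormalBasis ℝ E) hcomp]
  simp only [deriv_deriv_comp_norm_add_smul_sq hg, Finset.sum_add_distrib, ← Finset.sum_smul,
    ← Finset.mul_sum, OrthonormalBasis.sum_sq_inner_left, OrthonormalBasis.norm_eq_one]
  simp

end Laplacian

section Helmholtz

variable {E F G : Type*} [NormedAddCommGroup E] [InnerProductSpace ℝ E]

lemma eq_swap_of_norm_eq_of_linearIsometryEquiv_invariant {α : Type*} {f : E → E → α}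
    (hinv : ∀ (Q : E ≃ₗᵢ[ℝ] E) y z, f (Q y) (Q z) = f y z) {y z : E} (h : ‖y‖ = ‖z‖) :
    f y z = f z y := by
  set Q := (ℝ ∙ (y - z))ᗮ.reflection
  have hy : Q y = z := Submodule.reflection_sub h
  have hz : Q z = y := by rw [← hy, Submodule.reflection_reflection]
  simpa [hy, hz] using (hinv Q y z).symm

variable [FiniteDimensional ℝ E]
  [NormedAddCommGroup F] [NormedSpace ℝ F] [NormedAddCommGroup G] [NormedSpace ℝ G]

/-- `u` is a real-analytic solution of the Helmholtz equation `Δ u + κ u = 0` on `s`; in terms of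
the wave number, `κ = k²`. -/
structure IsHelmholtzOn (κ : ℝ) (u : E → F) (s : Set E) : Prop where
  analyticOnNhd : AnalyticOnNhd ℝ u s
  laplacian_eq : ∀ x ∈ s, Δ u x = -(κ • u x)

namespace IsHelmholtzOn

variable {κ : ℝ} {u v : E → F} {s t : Set E}

lemma mono (hu : IsHelmholtzOn κ u t) (hst : s ⊆ t) : IsHelmholtzOn κ u s :=
  ⟨hu.analyticOnNhd.mono hst, fun x hx => hu.laplacian_eq x (hst hx)⟩

lemma congr (hu : IsHelmholtzOn κ u s) (hs : IsOpen s) (huv : Set.EqOn u v s) :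
    IsHelmholtzOn κ v s where
  analyticOnNhd := hu.analyticOnNhd.congr hs huv
  laplacian_eq x hx := by
    have hlaplacian := (laplacian_congr_nhds (huv.eventuallyEq_of_mem (hs.mem_nhds hx))).eq_of_nhds
    rw [← hlaplacian, hu.laplacian_eq x hx, huv hx]

variable [CompleteSpace F]

lemma contDiffAt (hu : IsHelmholtzOn κ u s) {x : E} (hx : x ∈ s) : ContDiffAt ℝ 2 u x :=
  (hu.analyticOnNhd x hx).contDiffAt

lemma sub (hu : IsHelmholtzOn κ u s) (hv : IsHelmholtzOn κ v s) :
    IsHelmholtzOn κ (fun x => u x - v x) s where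
  analyticOnNhd := hu.analyticOnNhd.sub hv.analyticOnNhd
  laplacian_eq x hx := by
    refine ((hu.contDiffAt hx).laplacian_sub (hv.contDiffAt hx)).trans ?_
    rw [hu.laplacian_eq x hx, hv.laplacian_eq x hx, smul_sub]
    abel

lemma clm_comp (l : F →L[ℝ] G) (hu : IsHelmholtzOn κ u s) :
    IsHelmholtzOn κ (fun x => l (u x)) s where
  analyticOnNhd := l.comp_analyticOnNhd hu.analyticOnNhd
  laplacian_eq x hx := by
    refine (hu.contDiffAt hx).laplacian_CLM_comp_left.trans ?_
    rw [Function.comp_apply, hu.laplacian_eq x hx, map_neg, map_smul]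

end IsHelmholtzOn

lemma laplacian_const_sub_norm_sq (A : ℝ) (x : E) :
    Δ (fun x : E => A - ‖x‖ ^ 2) x = -(2 * finrank ℝ E) := by
  have hderiv : deriv (fun s : ℝ => A - s) = fun _ => -1 := by ext; simp
  rw [laplacian_comp_norm_sq (g := fun s : ℝ => A - s) (by fun_prop), hderiv]
  simp

lemma nonpos_of_subsolution_of_pos_strictSupersolution {κ : ℝ} {u w : E → ℝ} {K : Set E}
    (hK : IsCompact K) (hu : ContinuousOn u K) (hw : ContinuousOn w K) (hwpos : ∀ x ∈ K, 0 < w x)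
    (hu₂ : ∀ x ∈ interior K, ContDiffAt ℝ 2 u x) (hw₂ : ∀ x ∈ interior K, ContDiffAt ℝ 2 w x)
    (hsub : ∀ x ∈ interior K, 0 ≤ Δ u x + κ * u x)
    (hsuper : ∀ x ∈ interior K, Δ w x + κ * w x < 0)
    (hbdry : ∀ x ∈ frontier K, u x ≤ 0) {x : E} (hx : x ∈ K) : u x ≤ 0 := by
  obtain ⟨x₀, hx₀, hmax⟩ := hK.exists_isMaxOn ⟨x, hx⟩ (hu.div hw fun x hx => (hwpos x hx).ne')
  set m := u x₀ / w x₀ with hm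
  have hle : ∀ x ∈ K, u x ≤ m * w x := fun x hx => (div_le_iff₀ (hwpos x hx)).1 (hmax hx)
  suffices hm_nonpos : m ≤ 0 from
    (hle x hx).trans (mul_nonpos_of_nonpos_of_nonneg hm_nonpos (hwpos x hx).le)
  by_contra! hm_pos
  have hu₀ : u x₀ = m * w x₀ := by rw [hm, div_mul_cancel₀ _ (hwpos x₀ hx₀).ne']
  have hx₀_int : x₀ ∈ interior K := by
    by_contra hx₀_int
    have hx₀_frontier : x₀ ∈ frontier K := ⟨subset_closure hx₀, hx₀_int⟩
    exact (hbdry x₀ hx₀_frontier).not_gt (hu₀ ▸ mul_pos hm_pos (hwpos x₀ hx₀))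
  have hlocal : IsLocalMax (u - m • w) x₀ := by
    filter_upwards [mem_interior_iff_mem_nhds.1 hx₀_int] with x hx
    simpa [hu₀] using hle x hx
  have hmw : ContDiffAt ℝ 2 (m • w) x₀ := (hw₂ x₀ hx₀_int).const_smul m
  have hlap : Δ u x₀ - m * Δ w x₀ ≤ 0 := by
    have h : Δ (u - m • w) x₀ ≤ 0 :=
      laplacian_nonpos_of_isLocalMax ((hu₂ x₀ hx₀_int).sub hmw) hlocal
    rwa [(hu₂ x₀ hx₀_int).laplacian_sub hmw, laplacian_smul m (hw₂ x₀ hx₀_int)] at h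
  have hsub₀ := hsub x₀ hx₀_int
  rw [hu₀] at hsub₀
  linarith [mul_neg_of_pos_of_neg hm_pos (hsuper x₀ hx₀_int)]

lemma nonpos_on_closedBall_of_subsolution [Nontrivial E] {κ r : ℝ} {u : E → ℝ}
    (hr : κ * r ^ 2 < 2 * finrank ℝ E) (hu : ContinuousOn u (closedBall 0 r))
    (hu₂ : ∀ x ∈ ball 0 r, ContDiffAt ℝ 2 u x) (hsub : ∀ x ∈ ball 0 r, 0 ≤ Δ u x + κ * u x)
    (hbdry : ∀ x ∈ sphere 0 r, u x ≤ 0) {x : E} (hx : x ∈ closedBall 0 r) : u x ≤ 0 := by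
  obtain ⟨A, hrA, hκA⟩ : ∃ A, r ^ 2 < A ∧ κ * A < 2 * finrank ℝ E := by
    have hnhds : ∀ᶠ A in 𝓝 (r ^ 2), κ * A < 2 * finrank ℝ E :=
      (continuous_const.mul continuous_id).continuousAt.eventually_lt_const hr
    exact ((frequently_gt_nhds (r ^ 2)).and_eventually hnhds).exists
  have hpos : ∀ x ∈ closedBall (0 : E) r, 0 < A - ‖x‖ ^ 2 := fun x hx => by
    rw [mem_closedBall_zero_iff] at hx
    nlinarith [norm_nonneg x]
  have hsuper : ∀ x ∈ closedBall (0 : E) r,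
      Δ (fun x : E => A - ‖x‖ ^ 2) x + κ * (A - ‖x‖ ^ 2) < 0 := fun x hx => by
    rw [laplacian_const_sub_norm_sq]
    rcases lt_or_ge κ 0 with hκ | hκ
    · nlinarith [mul_neg_of_neg_of_pos hκ (hpos x hx)]
    · nlinarith [mul_nonneg hκ (sq_nonneg ‖x‖)]
  have hsmooth : ContDiff ℝ 2 fun x : E => A - ‖x‖ ^ 2 := contDiff_const.sub (contDiff_norm_sq ℝ)
  have hint : interior (closedBall (0 : E) r) = ball 0 r := interior_closedBall' 0 r
  exact nonpos_of_subsolution_of_pos_strictSupersolution (isCompact_closedBall 0 r) hu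
    hsmooth.continuous.continuousOn hpos (fun x hx => hu₂ x (hint ▸ hx))
    (fun x _ => hsmooth.contDiffAt) (fun x hx => hsub x (hint ▸ hx))
    (fun x hx => hsuper x (interior_subset hx))
    (fun x hx => hbdry x (frontier_closedBall_subset_sphere hx)) hx

lemma IsHelmholtzOn.eq_zero_of_eq_zero_on_sphere [Nontrivial E] [CompleteSpace F]
    {κ r : ℝ} {u : E → F}
    (hr : κ * r ^ 2 < 2 * finrank ℝ E) (hu : IsHelmholtzOn κ u (closedBall 0 r))
    (hbdry : ∀ x ∈ sphere 0 r, u x = 0) {x : E} (hx : x ∈ closedBall 0 r) : u x = 0 := by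
  refine SeparatingDual.eq_zero_of_forall_dual_eq_zero (R := ℝ) fun l => ?_
  have hnonpos : ∀ l : F →L[ℝ] ℝ, l (u x) ≤ 0 := fun l => by
    have hlu := (hu.clm_comp l).mono ball_subset_closedBall
    refine nonpos_on_closedBall_of_subsolution (u := fun x => l (u x)) hr
      (hu.clm_comp l).analyticOnNhd.continuousOn (fun x hx => hlu.contDiffAt hx) (fun x hx => ?_)
      (fun x hx => by rw [hbdry x hx, map_zero]) hx
    rw [hlu.laplacian_eq x hx, smul_eq_mul, neg_add_cancel]
  exact le_antisymm (hnonpos l) (by simpa using hnonpos (-l))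

lemma eventually_eq_swap_of_isHelmholtzOn_of_linearIsometryEquiv_invariant [CompleteSpace F]
    {κ R : ℝ} {f : E → E → F} (hinv : ∀ (Q : E ≃ₗᵢ[ℝ] E) y z, f (Q y) (Q z) = f y z)
    (hR : 0 < R) (hdiff : ∀ y ∈ ball 0 R, IsHelmholtzOn κ (fun z => f y z - f z y) (ball 0 R)) :
    ∀ᶠ y in 𝓝 0, ∀ᶠ z in 𝓝 0, f y z = f z y := by
  rcases subsingleton_or_nontrivial E with hE | hE
  · exact .of_forall fun y => .of_forall fun z => by rw [Subsingleton.elim y z]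
  have hsmall : ∀ᶠ r in 𝓝 (0 : ℝ), κ * r ^ 2 < 2 * finrank ℝ E ∧ r < R := by
    have hcont : Tendsto (fun r : ℝ => κ * r ^ 2) (𝓝 0) (𝓝 0) :=
      Continuous.tendsto' (by fun_prop) _ _ (by simp)
    exact (hcont.eventually_lt_const (by simpa using finrank_pos)).and (eventually_lt_nhds hR)
  have hle : ∀ᶠ y in 𝓝 (0 : E), ∀ z, ‖z‖ ≤ ‖y‖ → f y z = f z y := by
    filter_upwards [(tendsto_norm_zero (E := E)).eventually hsmall] with y ⟨hyκ, hyR⟩ z hzy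
    have hsub : closedBall (0 : E) ‖y‖ ⊆ ball 0 R := closedBall_subset_ball hyR
    refine sub_eq_zero.1 (((hdiff y (hsub (by simp))).mono hsub).eq_zero_of_eq_zero_on_sphere hyκ
      (fun x hx => ?_) (by simpa using hzy))
    rw [mem_sphere_zero_iff_norm] at hx
    exact sub_eq_zero.2 (eq_swap_of_norm_eq_of_linearIsometryEquiv_invariant hinv hx.symm)
  obtain ⟨ε, hε, hball⟩ := Metric.eventually_nhds_iff_ball.1 hle
  filter_upwards [ball_mem_nhds 0 hε] with y hy
  filter_upwards [ball_mem_nhds 0 hε] with z hz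
  exact (le_total ‖z‖ ‖y‖).elim (hball y hy z) fun h => (hball z hz y h).symm

theorem eq_swap_of_isHelmholtzOn_of_linearIsometryEquiv_invariant [CompleteSpace F] {κ R : ℝ}
    {f : E → E → F} (hinv : ∀ (Q : E ≃ₗᵢ[ℝ] E) y z, f (Q y) (Q z) = f y z)
    (hright : ∀ y ∈ ball 0 R, IsHelmholtzOn κ (fun z => f y z) (ball 0 R))
    (hleft : ∀ z ∈ ball 0 R, IsHelmholtzOn κ (fun y => f y z) (ball 0 R))
    {y z : E} (hy : y ∈ ball 0 R) (hz : z ∈ ball 0 R) : f y z = f z y := by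
  have hR : 0 < R := pos_of_mem_ball hy
  have hdiff : ∀ y ∈ ball (0 : E) R, IsHelmholtzOn κ (fun z => f y z - f z y) (ball 0 R) :=
    fun y hy => (hright y hy).sub (hleft y hy)
  have hcontinue : ∀ y ∈ ball (0 : E) R, (∀ᶠ z in 𝓝 0, f y z = f z y) →
      ∀ z ∈ ball 0 R, f y z = f z y := fun y hy hnear z hz =>
    sub_eq_zero.1 ((hdiff y hy).analyticOnNhd.eqOn_zero_of_preconnected_of_eventuallyEq_zero
      (convex_ball 0 R).isPreconnected (mem_ball_self hR)
      (hnear.mono fun z h => sub_eq_zero.2 h) hz)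
  have hnear : ∀ᶠ y in 𝓝 (0 : E), f z y = f y z := by
    filter_upwards [ball_mem_nhds 0 hR,
      eventually_eq_swap_of_isHelmholtzOn_of_linearIsometryEquiv_invariant hinv hR hdiff]
      with y hy hyzero using (hcontinue y hy hyzero z hz).symm
  exact (hcontinue z hz hnear y hy).symm

end Helmholtz

section CompactParameter

variable {X E : Type*} [TopologicalSpace X] [NormedAddCommGroup E]

/-- The pointwise norm `x ↦ ‖φ x‖` as an element of `C(X, ℝ)`. -/
noncomputable def normComp (φ : C(X, E)) : C(X, ℝ) :=
  (⟨norm, continuous_norm⟩ : C(E, ℝ)).comp φ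

/-- The pointwise norm `x ↦ ‖φ x‖` as an element of `C(X, ℂ)`. -/
noncomputable def ofRealNormComp (φ : C(X, E)) : C(X, ℂ) :=
  Complex.ofRealCLM.compLeftContinuous ℝ X (normComp φ)

lemma ofRealNormComp_apply (φ : C(X, E)) (x : X) : ofRealNormComp φ x = (‖φ x‖ : ℂ) := rfl

lemma isUnit_ofRealNormComp {φ : C(X, E)} (hφ : ∀ x, φ x ≠ 0) : IsUnit (ofRealNormComp φ) :=
  (ContinuousMap.isUnit_iff_forall_ne_zero _).2 fun x => by simpa [ofRealNormComp_apply] using hφ x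

variable [CompactSpace X]

lemma isOpen_setOf_continuousMap_forall_mem {Y : Type*} [TopologicalSpace Y] {U : Set Y}
    (hU : IsOpen U) : IsOpen {f : C(X, Y) | ∀ x, f x ∈ U} := by
  simpa [Set.mapsTo_univ_iff] using
    ContinuousMap.isOpen_setOfPred_mapsTo (X := X) isCompact_univ hU

/-- Squaring of positive continuous functions, with inverse the pointwise square root. It is a
local inverse of an analytic map, which is what makes the square root analytic. -/
noncomputable def positiveSqHomeomorph (X : Type*) [TopologicalSpace X] [CompactSpace X] :
    OpenPartialHomeomorph C(X, ℝ) C(X, ℝ) where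
  toFun f := f ^ 2
  invFun f := (⟨Real.sqrt, Real.continuous_sqrt⟩ : C(ℝ, ℝ)).comp f
  source := {f | ∀ x, 0 < f x}
  target := {f | ∀ x, 0 < f x}
  map_source' f hf x := pow_pos (hf x) 2
  map_target' f hf x := Real.sqrt_pos.2 (hf x)
  left_inv' f hf := by ext x; exact Real.sqrt_sq (hf x).le
  right_inv' f hf := by ext x; exact Real.sq_sqrt (hf x).le
  open_source := isOpen_setOf_continuousMap_forall_mem isOpen_Ioi
  open_target := isOpen_setOf_continuousMap_forall_mem isOpen_Ioi
  continuousOn_toFun := (continuous_pow 2).continuousOn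
  continuousOn_invFun := (ContinuousMap.continuous_postcomp _).continuousOn

lemma analyticAt_positiveSqHomeomorph_symm {f : C(X, ℝ)} (hf : ∀ x, 0 < f x) :
    AnalyticAt ℝ (positiveSqHomeomorph X).symm f := by
  set q := (positiveSqHomeomorph X).symm f
  have hq : ∀ x, 2 * q x ≠ 0 := fun x => (mul_pos two_pos (Real.sqrt_pos.2 (hf x))).ne'
  obtain ⟨U, hU⟩ : IsUnit (2 * q) := (ContinuousMap.isUnit_iff_forall_ne_zero _).2 hq
  refine (positiveSqHomeomorph X).analyticAt_symm (i := ContinuousLinearEquiv.smulLeft U) hf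
    (analyticAt_id.pow 2) ?_
  refine (((hasFDerivAt_id q).pow 2).congr_fderiv ?_).fderiv
  ext g x
  simp [hU, Units.smul_def]

variable [InnerProductSpace ℝ E] [FiniteDimensional ℝ E]

lemma analyticAt_normComp {φ : C(X, E)} (hφ : ∀ x, φ x ≠ 0) : AnalyticAt ℝ normComp φ := by
  let b := stdOrthonormalBasis ℝ E
  let normSqComp : C(X, E) → C(X, ℝ) := fun φ =>
    ∑ i, (innerSL ℝ (b i)).compLeftContinuous ℝ X φ ^ 2
  have hnormSq : ∀ φ x, normSqComp φ x = ‖φ x‖ ^ 2 := fun φ x => by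
    simp [normSqComp, b.sum_sq_inner_right]
  have hsqrt : (positiveSqHomeomorph X).symm ∘ normSqComp = normComp := by
    ext φ x
    exact (congrArg Real.sqrt (hnormSq φ x)).trans (Real.sqrt_sq (norm_nonneg _))
  rw [← hsqrt]
  refine (analyticAt_positiveSqHomeomorph_symm fun x => ?_).comp ?_
  · rw [hnormSq]
    exact pow_pos (norm_pos_iff.2 (hφ x)) 2
  · exact Finset.analyticAt_fun_sum _ fun i _ => (ContinuousLinearMap.analyticAt _ _).pow 2

end CompactParameter

section ExpKernel

variable {X E : Type*} [TopologicalSpace X] [CompactSpace X]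
  [NormedAddCommGroup E]

/-- The radial kernel `e^{c‖x‖} / ‖x‖`. In dimension three it solves `Δ u = c² u` away from the
origin; `c = ± i k` gives the outgoing and incoming Helmholtz kernels up to the factor `4π`. -/
noncomputable def expKernel (c : ℂ) (x : E) : ℂ :=
  Complex.exp (c * ‖x‖) / ‖x‖

lemma expKernel_linearIsometryEquiv [NormedSpace ℝ E] (Q : E ≃ₗᵢ[ℝ] E) (c : ℂ) (x : E) :
    expKernel c (Q x) = expKernel c x := by
  rw [expKernel, expKernel, Q.norm_map]

/-- The function `x ↦ expKernel c (φ x)` for nowhere vanishing `φ`, written in the Banach algebra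
`C(X, ℂ)` so that it is manifestly analytic in `φ`. -/
noncomputable def expKernelComp (c : ℂ) (φ : C(X, E)) : C(X, ℂ) :=
  NormedSpace.exp (c • ofRealNormComp φ) * Ring.inverse (ofRealNormComp φ)

lemma expKernelComp_apply (c : ℂ) {φ : C(X, E)} (hφ : ∀ x, φ x ≠ 0) (x : X) :
    expKernelComp c φ x = expKernel c (φ x) := by
  have hexp : NormedSpace.exp (c • ofRealNormComp φ) x = Complex.exp (c * ‖φ x‖) := by
    rw [Complex.exp_eq_exp_ℂ]
    exact NormedSpace.map_exp (ContinuousMap.evalAlgHom ℂ ℂ x) (continuous_eval_const x) _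
  have hinv : (‖φ x‖ : ℂ) * Ring.inverse (ofRealNormComp φ) x = 1 :=
    congrArg (· x) (Ring.mul_inverse_cancel _ (isUnit_ofRealNormComp hφ))
  rw [expKernelComp, expKernel, ContinuousMap.mul_apply, hexp, div_eq_mul_inv,
    eq_inv_of_mul_eq_one_right hinv]

variable [InnerProductSpace ℝ E] [FiniteDimensional ℝ E]

lemma analyticAt_expKernelComp (c : ℂ) {φ : C(X, E)} (hφ : ∀ x, φ x ≠ 0) :
    AnalyticAt ℝ (expKernelComp c) φ := by
  have hnorm : AnalyticAt ℝ ofRealNormComp φ :=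
    (ContinuousLinearMap.analyticAt _ _).comp (analyticAt_normComp hφ)
  have hexp : AnalyticAt ℝ (fun φ => NormedSpace.exp (c • ofRealNormComp φ)) φ :=
    (NormedSpace.exp_analytic (𝕂 := ℝ) _).comp (hnorm.const_smul (c := c))
  have hinv : AnalyticAt ℝ Ring.inverse (ofRealNormComp φ) := by
    obtain ⟨U, hU⟩ := isUnit_ofRealNormComp hφ
    exact hU ▸ analyticAt_inverse U
  exact hexp.mul (hinv.comp hnorm)

end ExpKernel

section ExpKernelLaplacian

lemma hasDerivAt_cexp_mul_sqrt (c : ℂ) {s : ℝ} (hs : 0 < s) :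
    HasDerivAt (fun s : ℝ => Complex.exp (c * √s)) (Complex.exp (c * √s) * (c / (2 * √s))) s := by
  have hsqrt := (Real.hasDerivAt_sqrt hs.ne').ofReal_comp
  convert (hsqrt.const_mul c).cexp using 1
  push_cast
  ring

lemma hasDerivAt_cexp_mul_sqrt_div_sqrt (c : ℂ) {s : ℝ} (hs : 0 < s) :
    HasDerivAt (fun s : ℝ => Complex.exp (c * √s) / √s)
      (Complex.exp (c * √s) * (c * √s - 1) / (2 * (√s : ℂ) ^ 3)) s := by
  have hsqrt : (√s : ℂ) ≠ 0 := Complex.ofReal_ne_zero.2 (Real.sqrt_pos.2 hs).ne'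
  refine ((hasDerivAt_cexp_mul_sqrt c hs).div (Real.hasDerivAt_sqrt hs.ne').ofReal_comp
    hsqrt).congr_deriv ?_
  push_cast
  field_simp

lemma hasDerivAt_deriv_cexp_mul_sqrt_div_sqrt (c : ℂ) {s : ℝ} (hs : 0 < s) :
    HasDerivAt (deriv fun s : ℝ => Complex.exp (c * √s) / √s)
      (Complex.exp (c * √s) * (c ^ 2 * √s ^ 2 - 3 * c * √s + 3) / (4 * (√s : ℂ) ^ 5)) s := by
  have hsqrt : (√s : ℂ) ≠ 0 := Complex.ofReal_ne_zero.2 (Real.sqrt_pos.2 hs).ne'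
  have hderiv : deriv (fun s : ℝ => Complex.exp (c * √s) / √s) =ᶠ[𝓝 s]
      fun s : ℝ => Complex.exp (c * √s) * (c * √s - 1) / (2 * (√s : ℂ) ^ 3) := by
    filter_upwards [lt_mem_nhds hs] with t ht using (hasDerivAt_cexp_mul_sqrt_div_sqrt c ht).deriv
  have hs' := (Real.hasDerivAt_sqrt hs.ne').ofReal_comp
  refine HasDerivAt.congr_of_eventuallyEq ?_ hderiv
  refine (((hasDerivAt_cexp_mul_sqrt c hs).mul ((hs'.const_mul c).sub_const 1)).div
    ((hs'.pow 3).const_mul 2) (by simpa using hsqrt)).congr_deriv ?_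
  push_cast
  simp only [Pi.pow_apply, Pi.mul_apply]
  field_simp
  ring

variable {E : Type*} [NormedAddCommGroup E] [InnerProductSpace ℝ E]

lemma contDiffAt_expKernel (c : ℂ) {n} {x : E} (hx : x ≠ 0) : ContDiffAt ℝ n (expKernel c) x := by
  have hnorm : ContDiffAt ℝ n (fun x : E => (‖x‖ : ℂ)) x :=
    Complex.ofRealCLM.contDiff.contDiffAt.comp x (contDiffAt_norm ℝ hx)
  have hne : (‖x‖ : ℂ) ≠ 0 := by simpa using hx
  have hmul : (expKernel c : E → ℂ) = fun x => Complex.exp (c * ‖x‖) * (‖x‖ : ℂ)⁻¹ :=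
    funext fun x => div_eq_mul_inv _ _
  rw [hmul]
  exact (contDiffAt_const.mul hnorm).cexp.mul (hnorm.inv hne)

variable [FiniteDimensional ℝ E]

lemma laplacian_expKernel (hE : finrank ℝ E = 3) (c : ℂ) {x : E} (hx : x ≠ 0) :
    Δ (expKernel c : E → ℂ) x = c ^ 2 * expKernel c x := by
  have hs : 0 < ‖x‖ ^ 2 := pow_pos (norm_pos_iff.2 hx) 2
  have hnorm : (‖x‖ : ℂ) ≠ 0 := by simpa using hx
  have hradial : (expKernel c : E → ℂ) =
      fun x => (fun s : ℝ => Complex.exp (c * √s) / √s) (‖x‖ ^ 2) := by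
    ext x
    simp [expKernel]
  have hsmooth : ContDiffAt ℝ 2 (fun s : ℝ => Complex.exp (c * √s) / √s) (‖x‖ ^ 2) := by
    have hsqrt : ContDiffAt ℝ 2 (fun s : ℝ => (√s : ℂ)) (‖x‖ ^ 2) :=
      Complex.ofRealCLM.contDiff.contDiffAt.comp _ (Real.contDiffAt_sqrt hs.ne')
    have hne : (√(‖x‖ ^ 2) : ℂ) ≠ 0 := by simpa using hx
    simp only [div_eq_mul_inv]
    exact (contDiffAt_const.mul hsqrt).cexp.mul (hsqrt.inv hne)
  conv_lhs => rw [hradial]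
  rw [laplacian_comp_norm_sq hsmooth, (hasDerivAt_deriv_cexp_mul_sqrt_div_sqrt c hs).deriv,
    (hasDerivAt_cexp_mul_sqrt_div_sqrt c hs).deriv, hE, Real.sqrt_sq (norm_nonneg x), expKernel]
  simp only [Complex.real_smul]
  push_cast
  field_simp
  ring

lemma laplacian_expKernel_const_sub (hE : finrank ℝ E = 3) (c : ℂ) {a z : E} (hz : a ≠ z) :
    Δ (fun z : E => expKernel c (a - z)) z = c ^ 2 * expKernel c (a - z) := by
  have hsymm : ∀ z : E, expKernel c (a - z) = expKernel c (z - a) := fun z => by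
    rw [expKernel, expKernel, norm_sub_rev]
  simp only [hsymm]
  rw [← laplacian_expKernel hE c (sub_ne_zero.2 hz.symm),
    laplacian_eq_iteratedFDeriv_stdOrthonormalBasis,
    laplacian_eq_iteratedFDeriv_stdOrthonormalBasis]
  simp only [iteratedFDeriv_comp_sub]

end ExpKernelLaplacian

section Potential

variable {X E : Type*} [TopologicalSpace X] [CompactSpace X]
  [NormedAddCommGroup E] [InnerProductSpace ℝ E]

lemma eventually_expKernelComp_smul_sub_apply (c : ℂ) {v a : C(X, E)} {t₀ : ℝ}
    (hne : ∀ x, t₀ • v x - a x ≠ 0) :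
    ∀ᶠ t in 𝓝 t₀, ∀ x, expKernelComp c (t • v - a) x = expKernel c (t • v x - a x) := by
  have hray : Continuous fun t : ℝ => t • v - a := by fun_prop
  have hopen : IsOpen {φ : C(X, E) | ∀ x, φ x ∈ ({0}ᶜ : Set E)} :=
    isOpen_setOf_continuousMap_forall_mem isOpen_compl_singleton
  filter_upwards [hray.continuousAt.preimage_mem_nhds (hopen.mem_nhds hne)] with t ht
  exact expKernelComp_apply c ht

variable [FiniteDimensional ℝ E]

lemma isHelmholtzOn_of_forall_eval {F : Type*} [NormedAddCommGroup F] [NormedSpace ℝ F]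
    [CompleteSpace F] {κ : ℝ} {u : E → C(X, F)} {s : Set E} (hu : AnalyticOnNhd ℝ u s)
    (heval : ∀ z ∈ s, ∀ x, Δ (fun z => u z x) z = -(κ • u z x)) : IsHelmholtzOn κ u s where
  analyticOnNhd := hu
  laplacian_eq z hz := by
    ext x
    have hcomm : Δ (fun z => u z x) z = Δ u z x :=
      ContDiffAt.laplacian_CLM_comp_left (f := u) (l := ContinuousMap.evalCLM ℝ x)
        (hu z hz).contDiffAt
    rw [← hcomm, heval z hz x, ContinuousMap.neg_apply, ContinuousMap.smul_apply]

lemma isHelmholtzOn_expKernelComp (hE : finrank ℝ E = 3) {κ : ℝ} {c : ℂ} (hc : c ^ 2 = -κ)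
    (a : C(X, E)) :
    IsHelmholtzOn κ (fun z => expKernelComp c (a - .const X z)) (Set.range a)ᶜ := by
  have hne : ∀ z ∈ (Set.range a)ᶜ, ∀ x, (a - .const X z) x ≠ 0 := fun z hz x =>
    sub_ne_zero.2 fun h => hz ⟨x, h⟩
  refine isHelmholtzOn_of_forall_eval (fun z hz => ?_) fun z hz x => ?_
  · have hshift : AnalyticAt ℝ (fun z : E => a - .const X z) z :=
      analyticAt_const.sub ((ContinuousLinearMap.const ℝ X).analyticAt z)
    exact (analyticAt_expKernelComp c (hne z hz)).comp_of_eq hshift rfl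
  · have hopen : IsOpen (Set.range a)ᶜ := (isCompact_range a.continuous).isClosed.isOpen_compl
    have hkernel : ∀ z ∈ (Set.range a)ᶜ,
        expKernelComp c (a - .const X z) x = expKernel c (a x - z) := fun z hz =>
      expKernelComp_apply c (hne z hz) x
    have hlaplacian : Δ (fun z : E => expKernelComp c (a - .const X z) x) z =
        Δ (fun z : E => expKernel c (a x - z)) z :=
      (laplacian_congr_nhds (eventuallyEq_of_mem (hopen.mem_nhds hz) hkernel)).eq_of_nhds
    rw [hlaplacian, hkernel z hz,
      laplacian_expKernel_const_sub hE c fun h => hz ⟨x, h⟩, hc, neg_mul, Complex.real_smul]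

lemma exists_hasDerivAt_expKernelComp (c : ℂ) {v a : C(X, E)} {t₀ : ℝ}
    (hne : ∀ x, t₀ • v x - a x ≠ 0) :
    ∃ U' : C(X, ℂ), HasDerivAt (fun t : ℝ => expKernelComp c (t • v - a)) U' t₀ ∧
      ∀ x, U' x = fderiv ℝ (expKernel c) (t₀ • v x - a x) (v x) := by
  have hray : AnalyticAt ℝ (fun t : ℝ => t • v - a) t₀ :=
    (analyticAt_id.smul analyticAt_const).sub analyticAt_const
  have hU := ((analyticAt_expKernelComp c hne).comp_of_eq hray rfl).differentiableAt.hasDerivAt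
  refine ⟨_, hU, fun x => ?_⟩
  have heval := (ContinuousMap.evalCLM ℝ x).hasFDerivAt.comp_hasDerivAt t₀ hU
  have hpointwise : (fun t : ℝ => expKernelComp c (t • v - a) x) =ᶠ[𝓝 t₀]
      fun t => expKernel c (t • v x - a x) :=
    (eventually_expKernelComp_smul_sub_apply c hne).mono fun t ht => ht x
  have hline : HasDerivAt (fun t : ℝ => t • v x - a x) (v x) t₀ := by
    simpa using ((hasDerivAt_id' t₀).smul_const (v x)).sub_const (a x)
  have hkernel := ((contDiffAt_expKernel (n := 1) c (hne x)).differentiableAt one_ne_zero)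
    |>.hasFDerivAt.comp_hasDerivAt t₀ hline
  exact heval.unique (hkernel.congr_of_eventuallyEq hpointwise)

variable [MeasurableSpace X] [BorelSpace X] (μ : Measure X) [IsFiniteMeasure μ]

/-- Integration against the complex density `g`. -/
noncomputable def integralMulCLM (g : C(X, ℂ)) : C(X, ℂ) →L[ℝ] ℂ :=
  (L1.integralCLM (μ := μ)).comp
    ((ContinuousMap.toLp 1 μ ℝ).comp (ContinuousLinearMap.mul ℝ C(X, ℂ) g))

lemma integralMulCLM_apply (g f : C(X, ℂ)) : integralMulCLM μ g f = ∫ x, g x * f x ∂μ :=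
  calc integralMulCLM μ g f = L1.integral (ContinuousMap.toLp 1 μ ℝ (g * f)) :=
        (L1.integral_eq _).symm
    _ = ∫ x, g x * f x ∂μ :=
        (L1.integral_eq_integral _).trans (integral_congr_ae (ContinuousMap.coeFn_toLp μ (g * f)))

lemma isHelmholtzOn_integral_mul_expKernel (hE : finrank ℝ E = 3) {κ : ℝ} {c : ℂ}
    (hc : c ^ 2 = -κ) (g : C(X, ℂ)) (a : C(X, E)) :
    IsHelmholtzOn κ (fun z => ∫ x, g x * expKernel c (a x - z) ∂μ) (Set.range a)ᶜ := by
  refine ((isHelmholtzOn_expKernelComp hE hc a).clm_comp (integralMulCLM μ g)).congr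
    (isCompact_range a.continuous).isClosed.isOpen_compl fun z hz => ?_
  have hne : ∀ x, (a - .const X z) x ≠ 0 := fun x => sub_ne_zero.2 fun h => hz ⟨x, h⟩
  simp only [integralMulCLM_apply, expKernelComp_apply c hne, ContinuousMap.sub_apply,
    ContinuousMap.const_apply]

lemma integrable_mul_fderiv_expKernel (c : ℂ) (g : C(X, ℂ)) {v a : C(X, E)} {t₀ : ℝ}
    (hne : ∀ x, t₀ • v x - a x ≠ 0) :
    Integrable (fun x => g x * fderiv ℝ (expKernel c) (t₀ • v x - a x) (v x)) μ := by
  obtain ⟨U', -, hU'⟩ := exists_hasDerivAt_expKernelComp c hne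
  simp only [← hU']
  exact (g * U').continuous.integrable_of_hasCompactSupport (.of_compactSpace _)

lemma hasDerivAt_integral_mul_expKernel (c : ℂ) (g : C(X, ℂ)) {v a : C(X, E)} {t₀ : ℝ}
    (hne : ∀ x, t₀ • v x - a x ≠ 0) :
    HasDerivAt (fun t : ℝ => ∫ x, g x * expKernel c (t • v x - a x) ∂μ)
      (∫ x, g x * fderiv ℝ (expKernel c) (t₀ • v x - a x) (v x) ∂μ) t₀ := by
  obtain ⟨U', hderiv, hU'⟩ := exists_hasDerivAt_expKernelComp c hne
  have hintegral := (integralMulCLM μ g).hasFDerivAt.comp_hasDerivAt t₀ hderiv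
  simp only [integralMulCLM_apply, hU'] at hintegral
  refine hintegral.congr_of_eventuallyEq ?_
  filter_upwards [eventually_expKernelComp_smul_sub_apply c hne] with t ht
  simp only [Function.comp_apply, integralMulCLM_apply, ht]

end Potential

section Sphere

variable {E : Type*} [NormedAddCommGroup E] [InnerProductSpace ℝ E]

/-- The inclusion of the unit sphere as an element of `C(sphere 0 1, E)`. -/
def sphereInclusion : C(sphere (0 : E) 1, E) :=
  ⟨(↑), continuous_subtype_val⟩

lemma smul_sphere_sub_ne_zero {r : ℝ} {z : E} (hz : z ∈ ball 0 r) (ω : sphere (0 : E) 1) :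
    r • (ω : E) - z ≠ 0 := by
  refine sub_ne_zero.2 fun h => ?_
  rw [mem_ball_zero_iff, ← h, norm_smul, norm_eq_of_mem_sphere, mul_one, Real.norm_eq_abs] at hz
  exact hz.not_ge (le_abs_self r)

/-- The action of a linear isometry on the unit sphere. -/
def sphereHomeomorph (Q : E ≃ₗᵢ[ℝ] E) : sphere (0 : E) 1 ≃ₜ sphere (0 : E) 1 :=
  Q.toHomeomorph.subtype fun x => by simp

lemma coe_sphereHomeomorph (Q : E ≃ₗᵢ[ℝ] E) (ω : sphere (0 : E) 1) :
    (sphereHomeomorph Q ω : E) = Q ω := rfl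

variable [FiniteDimensional ℝ E]

lemma expKernelComp_smul_sphereInclusion_sub_const (c : ℂ) {r : ℝ} {y : E} (hy : y ∈ ball 0 r)
    (ω : sphere (0 : E) 1) :
    expKernelComp c (r • sphereInclusion - ContinuousMap.const _ y) ω =
      expKernel c (r • (ω : E) - y) :=
  expKernelComp_apply c (φ := r • sphereInclusion - ContinuousMap.const _ y)
    (smul_sphere_sub_ne_zero hy) ω

variable [MeasurableSpace E] [BorelSpace E]

open scoped Pointwise in
lemma measurePreserving_sphereHomeomorph (Q : E ≃ₗᵢ[ℝ] E) :
    MeasurePreserving (sphereHomeomorph Q).toMeasurableEquiv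
      (volume : Measure E).toSphere volume.toSphere := by
  have hmeas := (sphereHomeomorph Q).toMeasurableEquiv.measurable
  refine ⟨hmeas, ?_⟩
  ext s hs
  have himage : (↑) '' s = Q '' ((↑) '' (sphereHomeomorph Q ⁻¹' s)) := by
    simp only [Set.image_image, ← coe_sphereHomeomorph]
    rw [← Set.image_image _ (sphereHomeomorph Q), (sphereHomeomorph Q).image_preimage]
  have hcone : Set.Ioo (0 : ℝ) 1 • ((↑) '' s : Set E) =
      Q '' (Set.Ioo (0 : ℝ) 1 • ((↑) '' (sphereHomeomorph Q ⁻¹' s))) := by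
    rw [himage]
    exact (Set.image_image2_distrib_right fun r x => Q.map_smul r x).symm
  have hvolume : MeasurePreserving Q.toHomeomorph.toMeasurableEquiv (volume : Measure E) volume :=
    Q.measurePreserving
  rw [Measure.map_apply hmeas hs, Measure.toSphere_apply' _ hs,
    Measure.toSphere_apply' _ (hmeas hs), hcone, ← hvolume.measure_preimage_equiv (Q '' _)]
  exact congrArg _ (congrArg _ (Q.injective.preimage_image _).symm)

/-- The integral `∫ K_c(Rω - y) K_d(ρω - z) dσ(ω)` over the unit sphere, where `K_c` is
`expKernel c`. The two radii are kept apart so that differentiating in `ρ` produces the normal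
derivative of the second factor only. -/
noncomputable def spherePairing (c d : ℂ) (R ρ : ℝ) (y z : E) : ℂ :=
  ∫ ω : sphere (0 : E) 1, expKernel c (R • (ω : E) - y) * expKernel d (ρ • (ω : E) - z)
    ∂(volume : Measure E).toSphere

/-- The integral of `K_c(Rω - y)` against the normal derivative of `x ↦ K_d(x - z)` at `x = Rω`,
where `K_c` is `expKernel c`, over the unit sphere. -/
noncomputable def sphereNormalPairing (c d : ℂ) (R : ℝ) (y z : E) : ℂ :=
  ∫ ω : sphere (0 : E) 1,
    expKernel c (R • (ω : E) - y) * fderiv ℝ (expKernel d) (R • (ω : E) - z) ω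
    ∂(volume : Measure E).toSphere

lemma spherePairing_comm (c d : ℂ) (R ρ : ℝ) (y z : E) :
    spherePairing c d R ρ y z = spherePairing d c ρ R z y := by
  simp only [spherePairing, mul_comm]

lemma spherePairing_linearIsometryEquiv (Q : E ≃ₗᵢ[ℝ] E) (c d : ℂ) (R ρ : ℝ) (y z : E) :
    spherePairing c d R ρ (Q y) (Q z) = spherePairing c d R ρ y z := by
  have hrotate : ∀ (c : ℂ) (r : ℝ) (y : E) (ω : sphere (0 : E) 1),
      expKernel c (r • (sphereHomeomorph Q ω : E) - Q y) = expKernel c (r • (ω : E) - y) :=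
    fun c r y ω => by
      rw [coe_sphereHomeomorph, ← map_smul, ← map_sub, expKernel_linearIsometryEquiv]
  rw [spherePairing, ← (measurePreserving_sphereHomeomorph Q).integral_comp']
  simp only [Homeomorph.toMeasurableEquiv_coe, hrotate, spherePairing]

lemma isHelmholtzOn_spherePairing (hE : finrank ℝ E = 3) {κ : ℝ} {d : ℂ} (hd : d ^ 2 = -κ) (c : ℂ)
    {R ρ : ℝ} {y : E} (hy : y ∈ ball 0 R) :
    IsHelmholtzOn κ (fun z => spherePairing c d R ρ y z) (ball 0 ρ) := by
  simp only [spherePairing, ← expKernelComp_smul_sphereInclusion_sub_const c hy]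
  have hsub : ball 0 ρ ⊆ (Set.range (ρ • sphereInclusion : C(sphere (0 : E) 1, E)))ᶜ := by
    rintro z hz ⟨ω, hω⟩
    exact smul_sphere_sub_ne_zero hz ω (sub_eq_zero.2 hω)
  have hpotential := isHelmholtzOn_integral_mul_expKernel (volume : Measure E).toSphere hE hd
    (expKernelComp c (R • sphereInclusion - ContinuousMap.const _ y)) (ρ • sphereInclusion)
  exact hpotential.mono hsub

theorem spherePairing_symm (hE : finrank ℝ E = 3) {κ : ℝ} {c d : ℂ} (hc : c ^ 2 = -κ)
    (hd : d ^ 2 = -κ) {R ρ : ℝ} {y z : E} (hy : y ∈ ball 0 (min R ρ))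
    (hz : z ∈ ball 0 (min R ρ)) :
    spherePairing c d R ρ y z = spherePairing c d R ρ z y := by
  have hleft : ball (0 : E) (min R ρ) ⊆ ball 0 R := ball_subset_ball (min_le_left R ρ)
  have hright : ball (0 : E) (min R ρ) ⊆ ball 0 ρ := ball_subset_ball (min_le_right R ρ)
  refine eq_swap_of_isHelmholtzOn_of_linearIsometryEquiv_invariant
    (fun Q => spherePairing_linearIsometryEquiv Q c d R ρ)
    (fun y hy => (isHelmholtzOn_spherePairing hE hd c (hleft hy)).mono hright)
    (fun z hz => ?_) hy hz
  simp only [spherePairing_comm c d]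
  exact (isHelmholtzOn_spherePairing hE hc d (hright hz)).mono hleft

lemma hasDerivAt_spherePairing (c d : ℂ) {R : ℝ} {y z : E} (hy : y ∈ ball 0 R)
    (hz : z ∈ ball 0 R) :
    HasDerivAt (fun ρ => spherePairing c d R ρ y z) (sphereNormalPairing c d R y z) R := by
  simp only [spherePairing, sphereNormalPairing,
    ← expKernelComp_smul_sphereInclusion_sub_const c hy]
  exact hasDerivAt_integral_mul_expKernel _ d _ (v := sphereInclusion)
    (a := .const _ z) (smul_sphere_sub_ne_zero hz)

theorem sphereNormalPairing_symm (hE : finrank ℝ E = 3) {κ : ℝ} {c d : ℂ} (hc : c ^ 2 = -κ)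
    (hd : d ^ 2 = -κ) {R : ℝ} {y z : E} (hy : y ∈ ball 0 R) (hz : z ∈ ball 0 R) :
    sphereNormalPairing c d R y z = sphereNormalPairing c d R z y := by
  refine (hasDerivAt_spherePairing c d hy hz).unique
    ((hasDerivAt_spherePairing c d hz hy).congr_of_eventuallyEq ?_)
  rw [mem_ball_zero_iff] at hy hz
  filter_upwards [lt_mem_nhds hy, lt_mem_nhds hz] with ρ hyρ hzρ
  exact spherePairing_symm hE hc hd (by simp [hy, hyρ]) (by simp [hz, hzρ])

end Sphere

section Sinc

variable {E : Type*} [NormedAddCommGroup E]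

/-- Both sides vanish at `x = 0`, where every quotient is a division by zero. -/
lemma ofReal_sin_mul_norm_div (k : ℝ) (x : E) :
    ((Real.sin (k * ‖x‖) / (k * ‖x‖) : ℝ) : ℂ) =
      (2 * (Complex.I * k))⁻¹ * (expKernel (Complex.I * k) x - expKernel (-(Complex.I * k)) x) := by
  have hsin : Complex.sin (k * ‖x‖) =
      (2 * Complex.I)⁻¹ * (Complex.exp (Complex.I * k * ‖x‖) -
        Complex.exp (-(Complex.I * k) * ‖x‖)) := by
    rw [Complex.sin, mul_inv, Complex.inv_I]
    ring_nf
  push_cast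
  rw [hsin, expKernel, expKernel]
  ring

variable [InnerProductSpace ℝ E]

lemma fderiv_ofReal_sin_mul_norm_div (k : ℝ) {x : E} (hx : x ≠ 0) (v : E) :
    fderiv ℝ (fun x : E => ((Real.sin (k * ‖x‖) / (k * ‖x‖) : ℝ) : ℂ)) x v =
      (2 * (Complex.I * k))⁻¹ * (fderiv ℝ (expKernel (Complex.I * k)) x v -
        fderiv ℝ (expKernel (-(Complex.I * k))) x v) := by
  have hdiff : ∀ c : ℂ, DifferentiableAt ℝ (expKernel c) x := fun c =>
    (contDiffAt_expKernel c hx).differentiableAt one_ne_zero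
  simp only [ofReal_sin_mul_norm_div]
  rw [fderiv_const_mul ((hdiff _).fun_sub (hdiff _)), fderiv_fun_sub (hdiff _) (hdiff _)]
  simp only [smul_apply, sub_apply, smul_eq_mul]

variable [FiniteDimensional ℝ E] [MeasurableSpace E] [BorelSpace E]

lemma integrable_expKernel_mul_fderiv_expKernel_sphere (c d : ℂ) {R : ℝ} {y z : E}
    (hy : y ∈ ball 0 R) (hz : z ∈ ball 0 R) :
    Integrable (fun ω : sphere (0 : E) 1 =>
      expKernel c (R • (ω : E) - y) * fderiv ℝ (expKernel d) (R • (ω : E) - z) ω)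
      (volume : Measure E).toSphere := by
  simp only [← expKernelComp_smul_sphereInclusion_sub_const c hy]
  exact integrable_mul_fderiv_expKernel _ d _ (v := sphereInclusion)
    (a := .const _ z) (smul_sphere_sub_ne_zero hz)

lemma integral_expKernel_mul_fderiv_sin_mul_norm_div (c : ℂ) (k : ℝ) {R : ℝ} {y z : E}
    (hy : y ∈ ball 0 R) (hz : z ∈ ball 0 R) :
    ∫ ω : sphere (0 : E) 1, expKernel c (R • (ω : E) - y) *
      fderiv ℝ (fun x : E => ((Real.sin (k * ‖x - z‖) / (k * ‖x - z‖) : ℝ) : ℂ)) (R • (ω : E)) ω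
        ∂(volume : Measure E).toSphere =
      (2 * (Complex.I * k))⁻¹ * (sphereNormalPairing c (Complex.I * k) R y z -
        sphereNormalPairing c (-(Complex.I * k)) R y z) := by
  rw [sphereNormalPairing, sphereNormalPairing,
    ← integral_sub (integrable_expKernel_mul_fderiv_expKernel_sphere c _ hy hz)
      (integrable_expKernel_mul_fderiv_expKernel_sphere c _ hy hz), ← integral_const_mul]
  congr 1 with ω
  rw [fderiv_comp_sub (f := fun x : E => ((Real.sin (k * ‖x‖) / (k * ‖x‖) : ℝ) : ℂ)),
    fderiv_ofReal_sin_mul_norm_div k (smul_sphere_sub_ne_zero hz ω)]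
  ring

end Sinc

/-- **Reciprocity relation** (Lemma 2.1, 3D case). For `k, R > 0`, with
`Φ(x,y) = e^{ik|x-y|}/(4π|x-y|)` the outgoing fundamental solution of the Helmholtz
equation and `j₀(s) = sin s / s` the spherical Bessel function of order zero, the kernel
`I(y,z) = ∫_{∂B_R(0)} Φ(x,y) ∂_{ν_x} j₀(k|x-z|) ds(x)` (surface integral over the sphere
of radius `R`, parametrized as `x = Rω` with surface element `R² dσ(ω)` and outward unit
normal `ν_x = ω`) satisfies `I(y,z) = I(z,y)` for all `y, z` in the open ball `B_R(0)`. -/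
theorem reciprocity_relation_3d (k R : ℝ) (hk : 0 < k) (hR : 0 < R)
    (σ : Measure (Metric.sphere (0 : EuclideanSpace ℝ (Fin 3)) 1))
    (hσ : σ = (volume : Measure (EuclideanSpace ℝ (Fin 3))).toSphere)
    (Φ : EuclideanSpace ℝ (Fin 3) → EuclideanSpace ℝ (Fin 3) → ℂ)
    (hΦ : ∀ x y, Φ x y =
      Complex.exp (Complex.I * (k : ℂ) * (‖x - y‖ : ℂ)) / (4 * (π : ℂ) * (‖x - y‖ : ℂ)))
    (j₀ : ℝ → ℝ) (hj₀ : ∀ s, j₀ s = Real.sin s / s)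
    (Iker : EuclideanSpace ℝ (Fin 3) → EuclideanSpace ℝ (Fin 3) → ℂ)
    (hIker : ∀ y z, Iker y z =
      ∫ ω : Metric.sphere (0 : EuclideanSpace ℝ (Fin 3)) 1,
        (R ^ 2 : ℝ) •
          (Φ (R • (ω : EuclideanSpace ℝ (Fin 3))) y *
            fderiv ℝ (fun x : EuclideanSpace ℝ (Fin 3) => (j₀ (k * ‖x - z‖) : ℂ))
              (R • (ω : EuclideanSpace ℝ (Fin 3))) (ω : EuclideanSpace ℝ (Fin 3))) ∂σ)
    (y z : EuclideanSpace ℝ (Fin 3))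
    (hy : y ∈ Metric.ball (0 : EuclideanSpace ℝ (Fin 3)) R)
    (hz : z ∈ Metric.ball (0 : EuclideanSpace ℝ (Fin 3)) R) :
    Iker y z = Iker z y := by
  have hIker_eq : ∀ y ∈ ball 0 R, ∀ z ∈ ball 0 R, Iker y z =
      (R ^ 2 / (4 * π)) * ((2 * (Complex.I * k))⁻¹ *
        (sphereNormalPairing (Complex.I * k) (Complex.I * k) R y z -
          sphereNormalPairing (Complex.I * k) (-(Complex.I * k)) R y z)) := fun y hy z hz => by
    rw [hIker, hσ, ← integral_expKernel_mul_fderiv_sin_mul_norm_div _ k hy hz,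
      ← integral_const_mul]
    congr 1 with ω
    simp only [hΦ, hj₀, expKernel, Complex.real_smul]
    push_cast
    ring
  have hE : finrank ℝ (EuclideanSpace ℝ (Fin 3)) = 3 := finrank_euclideanSpace_fin
  have hwave : (Complex.I * k) ^ 2 = -(k ^ 2 : ℝ) := by simp [mul_pow]
  have hwave_neg : (-(Complex.I * k)) ^ 2 = -(k ^ 2 : ℝ) := (neg_sq _).trans hwave
  rw [hIker_eq y hy z hz, hIker_eq z hz y hy, sphereNormalPairing_symm hE hwave hwave hy hz,
    sphereNormalPairing_symm hE hwave hwave_neg hy hz]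
end

section
/- Let S : ℝ³ → ℝ be smooth with compact support contained in the open ball B_R(0), and let p(x,t) := (t/(4π)) ∫_{S²} S(x + tω) dσ(ω) be the Kirchhoff solution of the wave equation with zero initial value and initial velocity S. Then for every y ∈ B_R(0), S(y) = ∫_{∂B_R(0)} [((x−y)·ν_x)/(2π|x−y|²)] · ( ∂_t p(x,|x−y|)/|x−y| − ∂_{tt} p(x,|x−y|) ) ds(x), where ν_x = x/R is the outward unit normal of the sphere ∂B_R(0) and ds its surface measure. -/
open MeasureTheory Real Filter
open scoped RealInnerProductSpace Topology

/-!
Write `r = |Rω - y|` and let `Q` be the second derivative of `p(Rω, ·)` with respect to `t²`, so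
that the integrand is `-(2R²/π) (R - ⟪y, ω⟫) Q(r)`. Test `Q` against `ψ(t² - r²)` with `ψ`
supported in `(0, ∞)`. Two integrations by parts and polar coordinates turn the test into
`(2π)⁻¹ ∫ S(Rω + z) ψ''(|z|² - r²) dz`. After the shift `z ↦ z + y - Rω` the argument of `ψ''` is
`|z|² + 2⟪y, z⟫ - 2R⟪z, ω⟫`, affine in `ω`, so Archimedes' theorem (`⟪θ, ω⟫` is uniformly
distributed on `[-1, 1]`) and the fundamental theorem of calculus evaluate the integral over `ω`
explicitly. The endpoint `⟪θ, ω⟫ = 1` contributes nothing, because `S` is supported in the ball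
and `ψ` vanishes on `(-∞, 0]`. Letting `ψ` concentrate at `0` leaves `Q(r)` on one side and a
multiple of `S(y)` on the other.
-/

section CompactParameter

variable {X : Type*} [TopologicalSpace X] [CompactSpace X] [MeasurableSpace X]
  [OpensMeasurableSpace X] {μ : Measure X} [IsFiniteMeasure μ]

theorem integrable_of_continuous_of_compactSpace {f : X → ℝ} (hf : Continuous f) :
    Integrable f μ :=
  hf.integrable_of_hasCompactSupport (HasCompactSupport.of_compactSpace f)

theorem continuous_integral_of_compactSpace {Y : Type*} [TopologicalSpace Y]
    [FirstCountableTopology Y] [LocallyCompactSpace Y] {F : Y → X → ℝ}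
    (hF : Continuous (Function.uncurry F)) : Continuous fun y ↦ ∫ x, F y x ∂μ := by
  simpa using continuous_parametric_integral_of_continuous (μ := μ) hF isCompact_univ

theorem continuous_integral_setIntegral_of_compactSpace [FirstCountableTopology X]
    [LocallyCompactSpace X] {Y Z : Type*} [TopologicalSpace Y] [FirstCountableTopology Y]
    [LocallyCompactSpace Y] [TopologicalSpace Z] [MeasurableSpace Z] [OpensMeasurableSpace Z]
    {ν : Measure Z} [IsLocallyFiniteMeasure ν] {s : Set Z} (hs : IsCompact s)
    {F : Y → X → Z → ℝ} (hF : Continuous fun q : (Y × X) × Z ↦ F q.1.1 q.1.2 q.2) :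
    Continuous fun y ↦ ∫ x, (∫ z in s, F y x z ∂ν) ∂μ :=
  continuous_integral_of_compactSpace
    (continuous_parametric_integral_of_continuous (f := fun q : Y × X ↦ F q.1 q.2) hF hs)

theorem hasDerivAt_integral_of_compactSpace {F F' : ℝ → X → ℝ}
    (hF : Continuous (Function.uncurry F)) (hF' : Continuous (Function.uncurry F'))
    (hderiv : ∀ t x, HasDerivAt (F · x) (F' t x) t) (t : ℝ) :
    HasDerivAt (fun t ↦ ∫ x, F t x ∂μ) (∫ x, F' t x ∂μ) t := by
  obtain ⟨C, hC⟩ := ((isCompact_closedBall t 1).prod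
    (isCompact_univ (X := X))).bddAbove_image hF'.norm.continuousOn
  have section_continuous {G : ℝ → X → ℝ} (hG : Continuous (Function.uncurry G)) (s : ℝ) :
      Continuous (G s) := hG.comp (Continuous.prodMk_right s)
  refine (hasDerivAt_integral_of_dominated_loc_of_deriv_le (bound := fun _ ↦ C)
    (Metric.ball_mem_nhds t one_pos)
    (.of_forall fun s ↦
      (integrable_of_continuous_of_compactSpace (section_continuous hF s)).aestronglyMeasurable)
    (integrable_of_continuous_of_compactSpace (section_continuous hF t))
    (integrable_of_continuous_of_compactSpace (section_continuous hF' t)).aestronglyMeasurable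
    (.of_forall fun x s hs ↦ ?_) (integrable_const C)
    (.of_forall fun x s _ ↦ hderiv s x)).2
  exact hC ⟨(s, x), ⟨Metric.ball_subset_closedBall hs, Set.mem_univ x⟩, rfl⟩

end CompactParameter

section Polar

open Set Module

theorem integral_volumeIoiPow (n : ℕ) (g : ℝ → ℝ) :
    ∫ r : Ioi (0 : ℝ), g r ∂Measure.volumeIoiPow n = ∫ r in Ioi (0 : ℝ), r ^ n * g r := by
  simp only [Measure.volumeIoiPow, ENNReal.ofReal]
  rw [integral_withDensity_eq_integral_smul (measurable_subtype_coe.pow_const n).real_toNNReal,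
    integral_subtype_comap measurableSet_Ioi fun r ↦ Real.toNNReal (r ^ n) • g r]
  refine setIntegral_congr_fun measurableSet_Ioi fun r hr ↦ ?_
  rw [NNReal.smul_def, Real.coe_toNNReal _ (pow_nonneg (le_of_lt hr) n), smul_eq_mul]

variable {E : Type*} [NormedAddCommGroup E] [NormedSpace ℝ E] [FiniteDimensional ℝ E]
  [MeasurableSpace E] [BorelSpace E]

theorem measurableEmbedding_polarCoord :
    MeasurableEmbedding fun q : Metric.sphere (0 : E) 1 × Ioi (0 : ℝ) ↦ (q.2 : ℝ) • (q.1 : E) :=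
  (MeasurableEmbedding.subtype_coe (measurableSet_singleton 0).compl).comp
    (homeomorphUnitSphereProd E).symm.measurableEmbedding

variable [Nontrivial E] (μ : Measure E) [μ.IsAddHaarMeasure]

theorem measurePreserving_polarCoord :
    MeasurePreserving (fun q : Metric.sphere (0 : E) 1 × Ioi (0 : ℝ) ↦ (q.2 : ℝ) • (q.1 : E))
      (μ.toSphere.prod (Measure.volumeIoiPow (finrank ℝ E - 1))) μ := by
  have hsymm := μ.measurePreserving_homeomorphUnitSphereProd.symm
    (homeomorphUnitSphereProd E).toMeasurableEquiv
  have hcoe : MeasurePreserving ((↑) : ({0}ᶜ : Set E) → E) (μ.comap (↑)) μ := by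
    refine ⟨measurable_subtype_coe, ?_⟩
    rw [map_comap_subtype_coe (measurableSet_singleton 0).compl, restrict_compl_singleton]
  exact hcoe.comp hsymm

variable {μ} {f : E → ℝ}

theorem integrable_comp_polarCoord (hf : Integrable f μ) :
    Integrable (fun q : Metric.sphere (0 : E) 1 × Ioi (0 : ℝ) ↦ f ((q.2 : ℝ) • (q.1 : E)))
      (μ.toSphere.prod (Measure.volumeIoiPow (finrank ℝ E - 1))) :=
  ((measurePreserving_polarCoord μ).integrable_comp_emb measurableEmbedding_polarCoord).mpr hf

theorem integral_eq_integral_sphere_integral_Ioi (hf : Integrable f μ) :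
    ∫ x, f x ∂μ = ∫ ω : Metric.sphere (0 : E) 1,
      (∫ r in Ioi (0 : ℝ), r ^ (finrank ℝ E - 1) * f (r • (ω : E))) ∂μ.toSphere := by
  rw [← (measurePreserving_polarCoord μ).integral_comp measurableEmbedding_polarCoord f,
    integral_prod _ (integrable_comp_polarCoord hf)]
  exact integral_congr_ae (.of_forall fun ω ↦ integral_volumeIoiPow _ fun r ↦ f (r • (ω : E)))

theorem integral_eq_integral_Ioi_integral_sphere (hf : Integrable f μ) :
    ∫ x, f x ∂μ = ∫ r in Ioi (0 : ℝ),
      r ^ (finrank ℝ E - 1) * ∫ ω : Metric.sphere (0 : E) 1, f (r • (ω : E)) ∂μ.toSphere := by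
  rw [← (measurePreserving_polarCoord μ).integral_comp measurableEmbedding_polarCoord f,
    integral_prod_symm _ (integrable_comp_polarCoord hf)]
  exact integral_volumeIoiPow _ fun r ↦ ∫ ω : Metric.sphere (0 : E) 1, f (r • (ω : E)) ∂μ.toSphere

end Polar

section Archimedes

open Set Module
open scoped Pointwise

theorem map_norm_sq_volume_of_finrank_eq_two {F : Type*} [NormedAddCommGroup F]
    [InnerProductSpace ℝ F] [FiniteDimensional ℝ F] [MeasurableSpace F] [BorelSpace F]
    (hF : finrank ℝ F = 2) :
    (volume : Measure F).map (fun w ↦ ‖w‖ ^ 2) =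
      ENNReal.ofReal π • (volume : Measure ℝ).restrict (Ioi 0) := by
  have : Nontrivial F := finrank_pos_iff.mp (hF ▸ two_pos)
  have map_Iio (t : ℝ) : (volume : Measure F).map (fun w ↦ ‖w‖ ^ 2) (Iio t) =
      ENNReal.ofReal t * ENNReal.ofReal π := by
    have preimage_Iio : (fun w : F ↦ ‖w‖ ^ 2) ⁻¹' Iio t = Metric.ball 0 √t := by
      ext w
      simp [Real.lt_sqrt]
    rw [Measure.map_apply (by fun_prop) measurableSet_Iio, preimage_Iio,
      InnerProductSpace.volume_ball_of_dim_even (k := 1) (by rw [hF]), hF]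
    rcases le_total t 0 with ht | ht
    · simp [Real.sqrt_eq_zero_of_nonpos ht, ENNReal.ofReal_of_nonpos ht]
    · simp [← ENNReal.ofReal_pow, Real.sq_sqrt ht]
  have smul_Iio (t : ℝ) : (ENNReal.ofReal π • (volume : Measure ℝ).restrict (Ioi 0)) (Iio t) =
      ENNReal.ofReal t * ENNReal.ofReal π := by
    simp [Measure.restrict_apply, Iio_inter_Ioi, mul_comm]
  refine Measure.ext_of_Ico' _ _ (fun a b _ ↦ ?_) fun a b hab ↦ ?_
  · exact ne_top_of_le_ne_top (by finiteness)
      ((measure_mono Ico_subset_Iio_self).trans_eq (map_Iio b))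
  · rw [← Iio_sdiff_Iio,
      measure_sdiff (Iio_subset_Iio hab.le) nullMeasurableSet_Iio (by rw [map_Iio]; finiteness),
      measure_sdiff (Iio_subset_Iio hab.le) nullMeasurableSet_Iio (by rw [smul_Iio]; finiteness)]
    simp only [map_Iio, smul_Iio]

theorem Ioo_smul_image_sphere_inner_preimage {E : Type*} [NormedAddCommGroup E]
    [InnerProductSpace ℝ E] (θ : E) (A : Set ℝ) :
    Ioo (0 : ℝ) 1 • ((↑) '' ((fun ω : Metric.sphere (0 : E) 1 ↦ ⟪θ, (ω : E)⟫) ⁻¹' A) : Set E) =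
      (fun x ↦ (⟪θ, x⟫, ‖x‖ ^ 2)) ⁻¹' {q | q.2 ∈ Ioo 0 1 ∧ q.1 / √q.2 ∈ A} := by
  ext x
  simp only [Set.mem_smul, mem_image, mem_preimage, mem_ofPred_eq, Real.sqrt_sq (norm_nonneg x)]
  constructor
  · rintro ⟨r, ⟨hr0, hr1⟩, _, ⟨ω, hω, rfl⟩, rfl⟩
    have hr : ‖r • (ω : E)‖ = r := by simp [norm_smul, abs_of_pos hr0]
    rw [hr, inner_smul_right, mul_div_cancel_left₀ _ hr0.ne']
    exact ⟨⟨by positivity, by nlinarith⟩, hω⟩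
  · rintro ⟨⟨hx0, hx1⟩, hxA⟩
    have hx : ‖x‖ ≠ 0 := fun h ↦ by simp [h] at hx0
    refine ⟨‖x‖, ⟨by positivity, by nlinarith [norm_nonneg x]⟩, ‖x‖⁻¹ • x,
      ⟨⟨‖x‖⁻¹ • x, by simp [norm_smul, hx]⟩, ?_, rfl⟩, smul_inv_smul₀ hx x⟩
    change ⟪θ, ‖x‖⁻¹ • x⟫ ∈ A
    rwa [inner_smul_right, ← div_eq_inv_mul]

theorem volume_sq_lt_and_div_sqrt_mem {τ : ℝ} (hτ : 0 < τ) (A : Set ℝ) :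
    volume {z : ℝ | z ^ 2 < τ ∧ z / √τ ∈ A} = ENNReal.ofReal √τ * volume (A ∩ Ioo (-1) 1) := by
  have hτ' : 0 < √τ := Real.sqrt_pos.mpr hτ
  have hset : {z : ℝ | z ^ 2 < τ ∧ z / √τ ∈ A} = √τ • (A ∩ Ioo (-1) 1) := by
    ext z
    rw [mem_smul_set_iff_inv_smul_mem₀ hτ'.ne', smul_eq_mul, ← div_eq_inv_mul, mem_inter_iff,
      mem_Ioo, ← abs_lt, abs_div, abs_of_pos hτ', div_lt_one hτ', Real.lt_sqrt (abs_nonneg z),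
      sq_abs, and_comm, mem_ofPred_eq]
  rw [hset, Measure.addHaar_smul]
  simp [abs_of_pos hτ']

theorem lintegral_sqrt_Ioo_zero_one :
    ∫⁻ τ in Ioo (0 : ℝ) 1, ENNReal.ofReal √τ = ENNReal.ofReal (2 / 3) := by
  rw [← ofReal_integral_eq_lintegral_ofReal
    ((Real.continuous_sqrt.integrableOn_Icc).mono_set Ioo_subset_Icc_self)
    (.of_forall Real.sqrt_nonneg), ← integral_Ioc_eq_integral_Ioo,
    ← intervalIntegral.integral_of_le zero_le_one]
  simp only [Real.sqrt_eq_rpow]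
  rw [integral_rpow (by norm_num)]
  norm_num

theorem volume_cone_inter_parabola {A : Set ℝ} (hA : MeasurableSet A) :
    volume ({q : ℝ × ℝ | q.2 ∈ Ioo 0 1 ∧ q.1 / √q.2 ∈ A} ∩ {q | q.1 ^ 2 < q.2}) =
      ENNReal.ofReal (2 / 3) * volume (A ∩ Ioo (-1) 1) := by
  have hmeas : MeasurableSet
      ({q : ℝ × ℝ | q.2 ∈ Ioo 0 1 ∧ q.1 / √q.2 ∈ A} ∩ {q | q.1 ^ 2 < q.2}) :=
    ((measurableSet_Ioo.preimage (by fun_prop)).inter (hA.preimage (by fun_prop))).inter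
      (measurableSet_lt (by fun_prop) (by fun_prop))
  rw [Measure.volume_eq_prod, Measure.prod_apply_symm hmeas, ← lintegral_sqrt_Ioo_zero_one,
    ← lintegral_mul_const _ (by fun_prop), ← lintegral_indicator measurableSet_Ioo]
  refine lintegral_congr fun τ ↦ ?_
  by_cases hτ : τ ∈ Ioo 0 1
  · rw [indicator_of_mem hτ, ← volume_sq_lt_and_div_sqrt_mem hτ.1]
    congr 1
    ext z
    simp [hτ.1, hτ.2, and_comm]
  · rw [indicator_of_notMem hτ]
    refine measure_mono_null (fun z hz ↦ hτ hz.1.1) measure_empty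

variable {E : Type*} [NormedAddCommGroup E] [InnerProductSpace ℝ E] [FiniteDimensional ℝ E]
  [MeasurableSpace E] [BorelSpace E]

theorem measurePreserving_smul_add_orthogonal {θ : E} (hθ : ‖θ‖ = 1) :
    MeasurePreserving fun q : ℝ × (ℝ ∙ θ)ᗮ ↦ q.1 • θ + q.2 := by
  have h := (ℝ ∙ θ).orthogonalDecomposition.symm.measurePreserving.comp
    ((WithLp.volume_preserving_toLp (ℝ ∙ θ) (ℝ ∙ θ)ᗮ).comp
      ((LinearIsometryEquiv.toSpanUnitSingleton θ hθ).measurePreserving.prod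
        (MeasurePreserving.id volume)))
  refine (congrArg (MeasurePreserving · volume volume) ?_).mp h
  ext q
  simp

theorem map_inner_norm_sq_volume_of_finrank_eq_three (hE : finrank ℝ E = 3) {θ : E}
    (hθ : ‖θ‖ = 1) :
    (volume : Measure E).map (fun x ↦ (⟪θ, x⟫, ‖x‖ ^ 2)) =
      ENNReal.ofReal π • (volume : Measure (ℝ × ℝ)).restrict {q | q.1 ^ 2 < q.2} := by
  have : Fact (finrank ℝ E = 2 + 1) := ⟨hE⟩
  have hF : finrank ℝ (ℝ ∙ θ)ᗮ = 2 :=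
    Submodule.finrank_orthogonal_span_singleton (norm_ne_zero_iff.mp (hθ ▸ one_ne_zero))
  have shear : MeasurePreserving (fun q : ℝ × ℝ ↦ (q.1, q.1 ^ 2 + q.2)) :=
    (MeasurePreserving.id volume).skew_product (by fun_prop)
      (.of_forall fun z ↦ map_add_left_eq_self volume (z ^ 2))
  have θ_inner (w : (ℝ ∙ θ)ᗮ) : ⟪θ, (w : E)⟫ = 0 :=
    Submodule.mem_orthogonal_singleton_iff_inner_right.mp w.2
  have factor : (fun x : E ↦ (⟪θ, x⟫, ‖x‖ ^ 2)) ∘ (fun q : ℝ × (ℝ ∙ θ)ᗮ ↦ q.1 • θ + q.2) =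
      (fun q : ℝ × ℝ ↦ (q.1, q.1 ^ 2 + q.2)) ∘ Prod.map id (fun w : (ℝ ∙ θ)ᗮ ↦ ‖w‖ ^ 2) := by
    ext ⟨z, w⟩
    · simp [inner_add_right, inner_smul_right, hθ, θ_inner w]
    · simp [norm_add_sq_real, inner_smul_left, θ_inner w, norm_smul, hθ]
  have preimage_shear : (fun q : ℝ × ℝ ↦ (q.1, q.1 ^ 2 + q.2)) ⁻¹' {q | q.1 ^ 2 < q.2} =
      univ ×ˢ Ioi 0 := by
    ext q
    simp
  have shear_restrict := shear.restrict_preimage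
    (measurableSet_lt (by fun_prop) (by fun_prop) : MeasurableSet {q : ℝ × ℝ | q.1 ^ 2 < q.2})
  rw [preimage_shear, Measure.volume_eq_prod, ← Measure.prod_restrict,
    Measure.restrict_univ] at shear_restrict
  rw [← (measurePreserving_smul_add_orthogonal hθ).map_eq,
    Measure.map_map (by fun_prop) (by fun_prop), factor,
    ← Measure.map_map (by fun_prop) (by fun_prop), Measure.volume_eq_prod,
    ← Measure.map_prod_map _ _ measurable_id (by fun_prop), Measure.map_id,
    map_norm_sq_volume_of_finrank_eq_two hF, Measure.prod_smul_right, Measure.map_smul,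
    shear_restrict.map_eq, Measure.volume_eq_prod]

theorem map_inner_toSphere_of_finrank_eq_three (hE : finrank ℝ E = 3) {θ : E} (hθ : ‖θ‖ = 1) :
    (volume : Measure E).toSphere.map (fun ω : Metric.sphere (0 : E) 1 ↦ ⟪θ, (ω : E)⟫) =
      ENNReal.ofReal (2 * π) • (volume : Measure ℝ).restrict (Ioo (-1) 1) := by
  ext A hA
  have hcone : MeasurableSet {q : ℝ × ℝ | q.2 ∈ Ioo 0 1 ∧ q.1 / √q.2 ∈ A} :=
    (measurableSet_Ioo.preimage (by fun_prop)).inter (hA.preimage (by fun_prop))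
  have hconst : ((3 : ℕ) : ENNReal) * (ENNReal.ofReal π * ENNReal.ofReal (2 / 3)) =
      ENNReal.ofReal (2 * π) := by
    rw [← ENNReal.ofReal_natCast, ← ENNReal.ofReal_mul (by positivity),
      ← ENNReal.ofReal_mul (by positivity)]
    congr 1
    push_cast
    ring
  rw [Measure.map_apply (by fun_prop) hA, Measure.toSphere_apply' _ (hA.preimage (by fun_prop)),
    Ioo_smul_image_sphere_inner_preimage, ← Measure.map_apply (by fun_prop) hcone,
    map_inner_norm_sq_volume_of_finrank_eq_three hE hθ, Measure.smul_apply,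
    Measure.restrict_apply hcone, volume_cone_inter_parabola hA, hE, Measure.smul_apply,
    Measure.restrict_apply hA, smul_eq_mul, smul_eq_mul, ← hconst, mul_assoc, mul_assoc]

theorem integral_sphere_comp_inner (hE : finrank ℝ E = 3) {θ : E} (hθ : ‖θ‖ = 1) {g : ℝ → ℝ}
    (hg : Continuous g) :
    ∫ ω : Metric.sphere (0 : E) 1, g ⟪θ, (ω : E)⟫ ∂volume.toSphere =
      2 * π * ∫ u in (-1)..1, g u := by
  rw [← integral_map (φ := fun ω : Metric.sphere (0 : E) 1 ↦ ⟪θ, (ω : E)⟫)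
      (by fun_prop) hg.aestronglyMeasurable,
    map_inner_toSphere_of_finrank_eq_three hE hθ, integral_smul_measure,
    ENNReal.toReal_ofReal (by positivity), intervalIntegral.integral_of_le (by norm_num),
    integral_Ioc_eq_integral_Ioo, smul_eq_mul]

theorem measurePreserving_sphere_of_isometry (L : E ≃ₗᵢ[ℝ] E) :
    MeasurePreserving
      (fun ω : Metric.sphere (0 : E) 1 ↦ (⟨L ω, by simp⟩ : Metric.sphere (0 : E) 1))
      volume.toSphere volume.toSphere := by
  have hmeas : Measurable
      fun ω : Metric.sphere (0 : E) 1 ↦ (⟨L ω, by simp⟩ : Metric.sphere (0 : E) 1) :=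
    (L.continuous.measurable.comp measurable_subtype_coe).subtype_mk
  refine ⟨hmeas, ?_⟩
  ext s hs
  have cone_preimage : Ioo (0 : ℝ) 1 • ((↑) '' ((fun ω : Metric.sphere (0 : E) 1 ↦
        (⟨L ω, by simp⟩ : Metric.sphere (0 : E) 1)) ⁻¹' s) : Set E) =
      L ⁻¹' (Ioo (0 : ℝ) 1 • ((↑) '' s)) := by
    ext x
    simp only [Set.mem_smul, mem_preimage]
    constructor
    · rintro ⟨r, hr, _, ⟨ω, hω, rfl⟩, rfl⟩
      exact ⟨r, hr, L ω, ⟨_, hω, rfl⟩, (L.map_smul r ω).symm⟩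
    · rintro ⟨r, hr, _, ⟨ω, hω, rfl⟩, hx⟩
      refine ⟨r, hr, L.symm ω, ⟨⟨L.symm ω, by simp⟩, by simpa using hω, rfl⟩, ?_⟩
      rw [← L.symm.map_smul, hx, L.symm_apply_apply]
  rw [Measure.map_apply hmeas hs, Measure.toSphere_apply' _ (hmeas hs),
    Measure.toSphere_apply' _ hs, cone_preimage,
    L.measurePreserving.measure_preimage_emb L.toHomeomorph.measurableEmbedding]

theorem integral_sphere_comp_isometry (L : E ≃ₗᵢ[ℝ] E) {k : E → ℝ} (hk : Continuous k) :
    ∫ ω : Metric.sphere (0 : E) 1, k (L ω) ∂volume.toSphere =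
      ∫ ω : Metric.sphere (0 : E) 1, k ω ∂volume.toSphere := by
  have hL := measurePreserving_sphere_of_isometry L
  conv_rhs => rw [← hL.map_eq, integral_map hL.aemeasurable (by fun_prop)]

-- Averaging with the reflection across `ℝ ∙ θ` replaces `⟪y, ω⟫` by `⟪y, θ⟫ * ⟪θ, ω⟫`.
theorem integral_sphere_inner_mul_comp_inner (hE : finrank ℝ E = 3) (y : E) {θ : E}
    (hθ : ‖θ‖ = 1) {g : ℝ → ℝ} (hg : Continuous g) :
    ∫ ω : Metric.sphere (0 : E) 1, ⟪y, (ω : E)⟫ * g ⟪θ, (ω : E)⟫ ∂volume.toSphere =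
      ⟪y, θ⟫ * (2 * π * ∫ u in (-1)..1, u * g u) := by
  have reflection_apply (x : E) : (ℝ ∙ θ).reflection x = (2 * ⟪θ, x⟫) • θ - x := by
    rw [Submodule.reflection_apply, Submodule.starProjection_unit_singleton _ hθ, two_smul,
      two_mul, add_smul]
  have inner_reflection (x : E) : ⟪θ, (ℝ ∙ θ).reflection x⟫ = ⟪θ, x⟫ := by
    rw [reflection_apply, inner_sub_right, real_inner_smul_right, real_inner_self_eq_norm_sq, hθ]
    ring
  have average (x : E) :
      ⟪y, (ℝ ∙ θ).reflection x⟫ * g ⟪θ, (ℝ ∙ θ).reflection x⟫ + ⟪y, x⟫ * g ⟪θ, x⟫ =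
        2 * ⟪y, θ⟫ * (⟪θ, x⟫ * g ⟪θ, x⟫) := by
    rw [inner_reflection, reflection_apply, inner_sub_right, real_inner_smul_right]
    ring
  have reflect := integral_sphere_comp_isometry (ℝ ∙ θ).reflection
    (k := fun x ↦ ⟪y, x⟫ * g ⟪θ, x⟫) (by fun_prop)
  have sum := integral_add (μ := (volume : Measure E).toSphere)
    (f := fun ω : Metric.sphere (0 : E) 1 ↦
      ⟪y, (ℝ ∙ θ).reflection ω⟫ * g ⟪θ, (ℝ ∙ θ).reflection (ω : E)⟫)
    (g := fun ω : Metric.sphere (0 : E) 1 ↦ ⟪y, (ω : E)⟫ * g ⟪θ, (ω : E)⟫)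
    (integrable_of_continuous_of_compactSpace (by fun_prop))
    (integrable_of_continuous_of_compactSpace (by fun_prop))
  simp only [average, integral_const_mul] at sum
  rw [integral_sphere_comp_inner hE hθ (g := fun u ↦ u * g u) (by fun_prop), reflect] at sum
  linarith

theorem integral_sphere_sub_inner_mul_comp_inner (hE : finrank ℝ E = 3) (c : ℝ) (y : E) {θ : E}
    (hθ : ‖θ‖ = 1) {g : ℝ → ℝ} (hg : Continuous g) :
    ∫ ω : Metric.sphere (0 : E) 1, (c - ⟪y, (ω : E)⟫) * g ⟪θ, (ω : E)⟫ ∂volume.toSphere =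
      2 * π * ∫ u in (-1)..1, (c - ⟪y, θ⟫ * u) * g u := by
  simp only [sub_mul, mul_assoc]
  rw [integral_sub (integrable_of_continuous_of_compactSpace (by fun_prop))
      (integrable_of_continuous_of_compactSpace (by fun_prop)),
    intervalIntegral.integral_sub (Continuous.intervalIntegrable (by fun_prop) _ _)
      (Continuous.intervalIntegrable (by fun_prop) _ _),
    integral_const_mul, intervalIntegral.integral_const_mul, intervalIntegral.integral_const_mul,
    integral_sphere_comp_inner hE hθ hg, integral_sphere_inner_mul_comp_inner hE y hθ hg]
  ring

theorem toSphere_real_univ_of_finrank_eq_three (hE : finrank ℝ E = 3) :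
    (volume : Measure E).toSphere.real univ = 4 * π := by
  rw [Measure.toSphere_real_apply_univ, measureReal_def,
    InnerProductSpace.volume_ball_of_dim_odd (k := 1) hE, hE, ENNReal.ofReal_one, one_pow, one_mul,
    ENNReal.toReal_ofReal (by positivity)]
  norm_num [Nat.doubleFactorial]
  ring

end Archimedes

section SqDeriv

open Set

/-- The derivative of `f` with respect to the square of its argument, i.e. the operator
`(2t)⁻¹ d/dt`; it takes the junk value `0` at `t = 0`. -/
noncomputable def sqDeriv (f : ℝ → ℝ) (t : ℝ) : ℝ :=
  deriv f t / (2 * t)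

variable {f : ℝ → ℝ}

theorem hasDerivAt_comp_sqrt {τ : ℝ} (hτ : 0 < τ) (hf : DifferentiableAt ℝ f √τ) :
    HasDerivAt (fun s ↦ f √s) (sqDeriv f √τ) τ := by
  have h := hf.hasDerivAt.comp τ (Real.hasDerivAt_sqrt hτ.ne')
  rwa [mul_one_div] at h

theorem contDiffOn_sqDeriv {n : ℕ} (hf : ContDiffOn ℝ (n + 1) f (Ioi 0)) :
    ContDiffOn ℝ n (sqDeriv f) (Ioi 0) :=
  (hf.deriv_of_isOpen isOpen_Ioi le_rfl).div (by fun_prop)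
    fun _ ht ↦ mul_ne_zero two_ne_zero (ne_of_gt ht)

theorem sqDeriv_sqDeriv {t : ℝ} (ht : t ≠ 0) (hf : DifferentiableAt ℝ (deriv f) t) :
    sqDeriv (sqDeriv f) t = (deriv (deriv f) t - deriv f t / t) / (4 * t ^ 2) := by
  have h : HasDerivAt (sqDeriv f)
      ((deriv (deriv f) t * (2 * t) - deriv f t * (2 * 1)) / (2 * t) ^ 2) t :=
    hf.hasDerivAt.div ((hasDerivAt_id t).const_mul 2) (mul_ne_zero two_ne_zero ht)
  rw [sqDeriv, h.deriv]
  field_simp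
  ring

theorem integrable_mul_comp_sqrt {χ : ℝ → ℝ} (hχ : Continuous χ) (hχc : HasCompactSupport χ)
    (hχ0 : tsupport χ ⊆ Ioi 0) (hf : ContinuousOn f (Ioi 0)) :
    Integrable fun τ ↦ χ τ * f √τ := by
  have hcont : ContinuousOn (fun τ ↦ χ τ * f √τ) (Ioi 0) :=
    hχ.continuousOn.mul (hf.comp (by fun_prop) fun τ hτ ↦ Real.sqrt_pos.mpr hτ)
  exact (hcont.continuous_of_tsupport_subset isOpen_Ioi
    (tsupport_mul_subset_left.trans hχ0)).integrable_of_hasCompactSupport hχc.mul_right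

theorem integral_mul_sqDeriv_comp_sqrt {χ : ℝ → ℝ} (hf : ContDiffOn ℝ 1 f (Ioi 0))
    (hχ : ContDiff ℝ 1 χ) (hχc : HasCompactSupport χ) (hχ0 : tsupport χ ⊆ Ioi 0) :
    ∫ τ, χ τ * sqDeriv f √τ = -∫ τ, deriv χ τ * f √τ := by
  have hsqDeriv : ContinuousOn (sqDeriv f) (Ioi 0) := (contDiffOn_sqDeriv (n := 0) hf).continuousOn
  refine integral_mul_deriv_eq_deriv_mul_of_integrable (u := χ) (v := fun τ ↦ f √τ)
    (fun τ _ ↦ (hχ.differentiable one_ne_zero τ).hasDerivAt)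
    (fun τ hτ ↦ hasDerivAt_comp_sqrt (hχ0 hτ) ?_)
    (integrable_mul_comp_sqrt hχ.continuous hχc hχ0 hsqDeriv)
    (integrable_mul_comp_sqrt hχ.continuous_deriv_one hχc.deriv
      (tsupport_deriv_subset.trans hχ0) hf.continuousOn)
    (integrable_mul_comp_sqrt hχ.continuous hχc hχ0 hf.continuousOn)
  have hsqrt : 0 < √τ := Real.sqrt_pos.mpr (hχ0 hτ)
  exact (hf.differentiableOn one_ne_zero).differentiableAt (Ioi_mem_nhds hsqrt)

theorem integral_mul_sqDeriv_sqDeriv_comp_sqrt {χ : ℝ → ℝ} (hf : ContDiffOn ℝ 2 f (Ioi 0))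
    (hχ : ContDiff ℝ 2 χ) (hχc : HasCompactSupport χ) (hχ0 : tsupport χ ⊆ Ioi 0) :
    ∫ τ, χ τ * sqDeriv (sqDeriv f) √τ = ∫ τ, deriv (deriv χ) τ * f √τ := by
  rw [integral_mul_sqDeriv_comp_sqrt (contDiffOn_sqDeriv (n := 1) hf) (hχ.of_le one_le_two) hχc
      hχ0,
    integral_mul_sqDeriv_comp_sqrt (hf.of_le one_le_two) (hχ.deriv' (n := 1)) hχc.deriv
      (tsupport_deriv_subset.trans hχ0), neg_neg]

end SqDeriv

section Kirchhoff

theorem contDiff_uncurry_deriv {P : Type*} [NormedAddCommGroup P] [NormedSpace ℝ P]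
    {f : P → ℝ → ℝ} {n : ℕ} (hf : ContDiff ℝ (n + 1) (Function.uncurry f)) :
    ContDiff ℝ n (Function.uncurry fun p ↦ deriv (f p)) := by
  have hshift : ContDiff ℝ (n + 1) fun q : (P × ℝ) × ℝ ↦ f q.1.1 q.2 :=
    hf.comp (by fun_prop : ContDiff ℝ (n + 1) fun q : (P × ℝ) × ℝ ↦ (q.1.1, q.2))
  have hfderiv : ContDiff ℝ n fun q : P × ℝ ↦ fderiv ℝ (f q.1) q.2 :=
    ContDiff.fderiv (f := fun q : P × ℝ ↦ f q.1) hshift contDiff_snd le_rfl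
  exact hfderiv.clm_apply contDiff_const

theorem hasDerivAt_integral_of_contDiff {X P : Type*} [TopologicalSpace X] [CompactSpace X]
    [MeasurableSpace X] [OpensMeasurableSpace X] {μ : Measure X} [IsFiniteMeasure μ]
    [NormedAddCommGroup P] [NormedSpace ℝ P] {f : P → ℝ → ℝ}
    (hf : ContDiff ℝ 1 (Function.uncurry f)) {ι : X → P} (hι : Continuous ι) (t : ℝ) :
    HasDerivAt (fun t ↦ ∫ x, f (ι x) t ∂μ) (∫ x, deriv (f (ι x)) t ∂μ) t := by
  have hpair : Continuous fun q : ℝ × X ↦ (ι q.2, q.1) := by fun_prop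
  refine hasDerivAt_integral_of_compactSpace (F := fun t x ↦ f (ι x) t)
    (F' := fun t x ↦ deriv (f (ι x)) t) (hf.continuous.comp hpair)
    ((contDiff_uncurry_deriv (n := 0) hf).continuous.comp hpair) (fun t x ↦ ?_) t
  have hsection : ContDiff ℝ 1 (f (ι x)) :=
    hf.comp (by fun_prop : ContDiff ℝ 1 fun t : ℝ ↦ (ι x, t))
  exact (hsection.differentiable one_ne_zero t).hasDerivAt

/-- The integrand of Kirchhoff's formula at the point `q.1` in the direction `q.2`. -/
noncomputable def kirchhoffDensity {E : Type*} [NormedAddCommGroup E] [NormedSpace ℝ E]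
    (S : E → ℝ) (q : E × E) (t : ℝ) : ℝ :=
  t / (4 * π) * S (q.1 + t • q.2)

theorem contDiff_kirchhoffDensity {E : Type*} [NormedAddCommGroup E] [NormedSpace ℝ E]
    {S : E → ℝ} {n : WithTop ℕ∞} (hS : ContDiff ℝ n S) :
    ContDiff ℝ n (Function.uncurry (kirchhoffDensity S)) := by
  unfold kirchhoffDensity
  fun_prop

variable {E : Type*} [NormedAddCommGroup E] [InnerProductSpace ℝ E] [FiniteDimensional ℝ E]
  [MeasurableSpace E] [BorelSpace E]

/-- Kirchhoff's formula for the solution at `(x, t)` of the wave equation with initial value `0`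
and initial velocity `S`; it solves the wave equation when `E` has dimension `3`. -/
noncomputable def kirchhoff (S : E → ℝ) (x : E) (t : ℝ) : ℝ :=
  t / (4 * π) * ∫ ω : Metric.sphere (0 : E) 1, S (x + t • (ω : E)) ∂volume.toSphere

variable {S : E → ℝ}

theorem kirchhoff_eq_integral_kirchhoffDensity (S : E → ℝ) (x : E) :
    kirchhoff S x =
      fun t ↦ ∫ ω : Metric.sphere (0 : E) 1, kirchhoffDensity S (x, ω) t ∂volume.toSphere := by
  ext t
  simp only [kirchhoff, kirchhoffDensity, integral_const_mul]

theorem hasDerivAt_kirchhoff (hS : ContDiff ℝ 1 S) (x : E) (t : ℝ) :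
    HasDerivAt (kirchhoff S x)
      (∫ ω : Metric.sphere (0 : E) 1, deriv (kirchhoffDensity S (x, ω)) t ∂volume.toSphere) t := by
  rw [kirchhoff_eq_integral_kirchhoffDensity]
  exact hasDerivAt_integral_of_contDiff (contDiff_kirchhoffDensity hS)
    (by fun_prop : Continuous fun ω : Metric.sphere (0 : E) 1 ↦ (x, (ω : E))) t

theorem hasDerivAt_deriv_kirchhoff (hS : ContDiff ℝ 2 S) (x : E) (t : ℝ) :
    HasDerivAt (deriv (kirchhoff S x))
      (∫ ω : Metric.sphere (0 : E) 1,
        deriv (deriv (kirchhoffDensity S (x, ω))) t ∂volume.toSphere) t := by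
  rw [funext fun t ↦ (hasDerivAt_kirchhoff (hS.of_le one_le_two) x t).deriv]
  exact hasDerivAt_integral_of_contDiff
    (contDiff_uncurry_deriv (n := 1) (contDiff_kirchhoffDensity hS))
    (by fun_prop : Continuous fun ω : Metric.sphere (0 : E) 1 ↦ (x, (ω : E))) t

theorem continuous_deriv_kirchhoff (hS : ContDiff ℝ 1 S) :
    Continuous fun q : E × ℝ ↦ deriv (kirchhoff S q.1) q.2 := by
  simp only [fun q : E × ℝ ↦ (hasDerivAt_kirchhoff hS q.1 q.2).deriv]
  have hcont := (contDiff_uncurry_deriv (n := 0) (contDiff_kirchhoffDensity hS)).continuous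
  exact continuous_integral_of_compactSpace (hcont.comp (by fun_prop :
    Continuous fun q : (E × ℝ) × Metric.sphere (0 : E) 1 ↦ ((q.1.1, (q.2 : E)), q.1.2)))

theorem continuous_deriv_deriv_kirchhoff (hS : ContDiff ℝ 2 S) :
    Continuous fun q : E × ℝ ↦ deriv (deriv (kirchhoff S q.1)) q.2 := by
  simp only [fun q : E × ℝ ↦ (hasDerivAt_deriv_kirchhoff hS q.1 q.2).deriv]
  have hcont := (contDiff_uncurry_deriv (n := 0)
    (contDiff_uncurry_deriv (n := 1) (contDiff_kirchhoffDensity hS))).continuous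
  exact continuous_integral_of_compactSpace (hcont.comp (by fun_prop :
    Continuous fun q : (E × ℝ) × Metric.sphere (0 : E) 1 ↦ ((q.1.1, (q.2 : E)), q.1.2)))

theorem contDiff_kirchhoff (hS : ContDiff ℝ 2 S) (x : E) : ContDiff ℝ 2 (kirchhoff S x) := by
  have hderiv : ContDiff ℝ 1 (deriv (kirchhoff S x)) :=
    contDiff_one_iff_deriv.mpr ⟨fun t ↦ (hasDerivAt_deriv_kirchhoff hS x t).differentiableAt,
      (continuous_deriv_deriv_kirchhoff hS).comp (Continuous.prodMk_right x)⟩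
  exact contDiff_succ_iff_deriv (n := 1).mpr
    ⟨fun t ↦ (hasDerivAt_kirchhoff (hS.of_le one_le_two) x t).differentiableAt, by simp, hderiv⟩

theorem continuousOn_sqDeriv_sqDeriv_kirchhoff (hS : ContDiff ℝ 2 S) :
    ContinuousOn (fun q : E × ℝ ↦ sqDeriv (sqDeriv (kirchhoff S q.1)) q.2) {q | q.2 ≠ 0} := by
  have h₁ := continuous_deriv_kirchhoff (hS.of_le one_le_two)
  have h₂ := continuous_deriv_deriv_kirchhoff hS
  have hformula : ContinuousOn (fun q : E × ℝ ↦ (deriv (deriv (kirchhoff S q.1)) q.2 -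
      deriv (kirchhoff S q.1) q.2 / q.2) / (4 * q.2 ^ 2)) {q | q.2 ≠ 0} :=
    (h₂.continuousOn.sub (h₁.continuousOn.div (by fun_prop) fun q hq ↦ hq)).div (by fun_prop)
      fun q hq ↦ mul_ne_zero four_ne_zero (pow_ne_zero 2 hq)
  exact hformula.congr fun q hq ↦
    sqDeriv_sqDeriv hq (hasDerivAt_deriv_kirchhoff hS q.1 q.2).differentiableAt

theorem integral_mul_comp_norm_sq (hE : Module.finrank ℝ E = 3) (hS : Continuous S)
    (hSc : HasCompactSupport S) {φ : ℝ → ℝ} (hφ : Continuous φ) (x : E) :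
    ∫ z, S (x + z) * φ (‖z‖ ^ 2) = 2 * π * ∫ s in Set.Ioi 0, φ s * kirchhoff S x √s := by
  have : Nontrivial E := Module.nontrivial_of_finrank_pos (R := ℝ) (by rw [hE]; norm_num)
  have hint : Integrable fun z ↦ S (x + z) * φ (‖z‖ ^ 2) :=
    Continuous.integrable_of_hasCompactSupport (by fun_prop)
      (hSc.comp_homeomorph (Homeomorph.addLeft x)).mul_right
  rw [integral_eq_integral_Ioi_integral_sphere hint, hE,
    ← integral_comp_rpow_Ioi_of_pos (g := fun s ↦ φ s * kirchhoff S x √s) two_pos,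
    ← integral_const_mul]
  refine setIntegral_congr_fun measurableSet_Ioi fun r (hr : 0 < r) ↦ ?_
  have norm_smul_sphere (ω : Metric.sphere (0 : E) 1) : ‖r • (ω : E)‖ = r := by
    simp [norm_smul, abs_of_pos hr]
  simp only [norm_smul_sphere, integral_mul_const, kirchhoff, Real.rpow_two,
    Real.sqrt_sq hr.le, smul_eq_mul]
  norm_num
  field_simp
  ring

theorem integral_mul_sqDeriv_sqDeriv_kirchhoff (hE : Module.finrank ℝ E = 3)
    (hS : ContDiff ℝ 2 S) (hSc : HasCompactSupport S) {ψ : ℝ → ℝ} (hψ : ContDiff ℝ 2 ψ)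
    (hψc : HasCompactSupport ψ) (hψ0 : tsupport ψ ⊆ Set.Ioi 0) (x : E) {c : ℝ} (hc : 0 ≤ c) :
    ∫ s, ψ s * sqDeriv (sqDeriv (kirchhoff S x)) √(c + s) =
      (2 * π)⁻¹ * ∫ z, S (x + z) * deriv (deriv ψ) (‖z‖ ^ 2 - c) := by
  have hχc : HasCompactSupport fun τ ↦ ψ (τ - c) :=
    hψc.comp_homeomorph (Homeomorph.subRight c)
  have hχ0 : tsupport (fun τ ↦ ψ (τ - c)) ⊆ Set.Ioi 0 := by
    intro τ hτ
    have : 0 < τ - c :=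
      hψ0 (tsupport_comp_subset_preimage ψ (f := fun τ ↦ τ - c) (by fun_prop) hτ)
    exact Set.mem_Ioi.mpr (by linarith)
  have deriv_deriv_shift : deriv (deriv fun τ ↦ ψ (τ - c)) = fun τ ↦ deriv (deriv ψ) (τ - c) := by
    ext τ
    simp only [funext fun τ ↦ deriv_comp_sub_const (f := ψ) c τ, deriv_comp_sub_const]
  have deriv_deriv_zero (τ : ℝ) (hτ : τ ∉ Set.Ioi 0) : deriv (deriv ψ) (τ - c) = 0 := by
    rw [← congrFun deriv_deriv_shift τ]
    exact image_eq_zero_of_notMem_tsupport fun h ↦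
      hτ (hχ0 (tsupport_deriv_subset (tsupport_deriv_subset h)))
  calc ∫ s, ψ s * sqDeriv (sqDeriv (kirchhoff S x)) √(c + s)
      = ∫ τ, ψ (τ - c) * sqDeriv (sqDeriv (kirchhoff S x)) √τ := by
        rw [← integral_sub_right_eq_self _ c]
        simp
    _ = ∫ τ, deriv (deriv ψ) (τ - c) * kirchhoff S x √τ := by
        rw [integral_mul_sqDeriv_sqDeriv_comp_sqrt (contDiff_kirchhoff hS x).contDiffOn
          (by fun_prop) hχc hχ0, deriv_deriv_shift]
    _ = ∫ τ in Set.Ioi 0, deriv (deriv ψ) (τ - c) * kirchhoff S x √τ :=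
        (setIntegral_eq_integral_of_forall_compl_eq_zero fun τ hτ ↦ by
          rw [deriv_deriv_zero τ hτ, zero_mul]).symm
    _ = (2 * π)⁻¹ * ∫ z, S (x + z) * deriv (deriv ψ) (‖z‖ ^ 2 - c) := by
        rw [integral_mul_comp_norm_sq hE hS.continuous hSc (φ := fun s ↦ deriv (deriv ψ) (s - c))
          ((hψ.deriv' (n := 1)).continuous_deriv_one.comp (by fun_prop)) x,
          inv_mul_cancel_left₀ (by positivity)]

end Kirchhoff

section WeakIdentity

open Set

theorem integral_sub_mul_deriv_deriv_comp {ψ : ℝ → ℝ} (hψ : ContDiff ℝ 2 ψ) (R β c : ℝ) {a : ℝ}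
    (ha : a ≠ 0) :
    ∫ u in (-1)..1, (R - β * u) * deriv (deriv ψ) (c - a * u) =
      ((R + β) * deriv ψ (c + a) - (R - β) * deriv ψ (c - a)) / a -
        β * (ψ (c + a) - ψ (c - a)) / a ^ 2 := by
  have hψ' : ContDiff ℝ 1 (deriv ψ) := hψ.deriv' (n := 1)
  have : Continuous (deriv (deriv ψ)) := hψ'.continuous_deriv_one
  have hasDerivAt_line (u : ℝ) : HasDerivAt (fun u ↦ c - a * u) (-a) u := by
    simpa using ((hasDerivAt_id u).const_mul a).const_sub c
  have antideriv (u : ℝ) : HasDerivAt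
      (fun u ↦ β * ψ (c - a * u) / a ^ 2 - (R - β * u) * deriv ψ (c - a * u) / a)
      ((R - β * u) * deriv (deriv ψ) (c - a * u)) u := by
    have h₀ := (hψ.differentiable two_ne_zero _).hasDerivAt.comp u (hasDerivAt_line u)
    have h₁ := (hψ'.differentiable one_ne_zero _).hasDerivAt.comp u (hasDerivAt_line u)
    have h₂ : HasDerivAt (fun u ↦ R - β * u) (-β) u := by
      simpa using ((hasDerivAt_id u).const_mul β).const_sub R
    refine (((h₀.const_mul β).div_const (a ^ 2)).sub ((h₂.mul h₁).div_const a)).congr_deriv ?_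
    simp only [Function.comp_apply]
    field_simp
    ring
  rw [intervalIntegral.integral_eq_sub_of_hasDerivAt (fun u _ ↦ antideriv u)
    (Continuous.intervalIntegrable (by fun_prop) _ _)]
  ring_nf

/-- The factor multiplying the source along the ray of inclination `β = ⟪y, θ⟫` that is left after
integrating the test function `ψ` over the sphere of radius `R`. The parameter `ε` is the scale:
for `ε ≠ 0` it comes from `ε = 1` by dilating `ψ` and `κ` by `ε`, while at `ε = 0` the argument of
`ψ` becomes linear in `κ`. -/
noncomputable def radialKernel (ψ : ℝ → ℝ) (R β ε κ : ℝ) : ℝ :=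
  κ * (R + β) / (2 * R) * deriv ψ (ε * κ ^ 2 + 2 * (R + β) * κ) -
    β / (4 * R ^ 2) * ψ (ε * κ ^ 2 + 2 * (R + β) * κ)

variable {E : Type*} [NormedAddCommGroup E] [InnerProductSpace ℝ E]

theorem add_two_mul_inner_le {R ρ : ℝ} {y θ : E} (hθ : ‖θ‖ = 1) (hy : ‖y‖ ≤ R)
    (hyρ : ‖y + ρ • θ‖ ≤ R) : ρ + 2 * ⟪y, θ⟫ ≤ 2 * R := by
  have h₁ := (real_inner_le_norm y θ).trans_eq (by rw [hθ, mul_one])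
  have h₂ := (real_inner_le_norm (y + ρ • θ) θ).trans_eq (by rw [hθ, mul_one])
  rw [inner_add_left, real_inner_smul_left, real_inner_self_eq_norm_sq, hθ] at h₂
  linarith

variable [FiniteDimensional ℝ E] [MeasurableSpace E] [BorelSpace E]

theorem integral_sphere_deriv_deriv_eq_radialKernel (hE : Module.finrank ℝ E = 3) {ψ : ℝ → ℝ}
    (hψ : ContDiff ℝ 2 ψ) (hψ0 : tsupport ψ ⊆ Ioi 0) {R : ℝ} (hR : 0 < R) (y : E) {θ : E}
    (hθ : ‖θ‖ = 1) {ρ : ℝ} (hρ : 0 < ρ) (hρR : ρ + 2 * ⟪y, θ⟫ ≤ 2 * R) :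
    ∫ v : Metric.sphere (0 : E) 1, (R - ⟪y, (v : E)⟫) *
        deriv (deriv ψ) (‖ρ • θ‖ ^ 2 + 2 * ⟪y, ρ • θ⟫ - 2 * R * ⟪ρ • θ, (v : E)⟫)
        ∂volume.toSphere =
      2 * π / ρ ^ 2 * radialKernel ψ R ⟪y, θ⟫ 1 ρ := by
  have : Continuous (deriv (deriv ψ)) := (hψ.deriv' (n := 1)).continuous_deriv_one
  have hnorm : ‖ρ • θ‖ = ρ := by rw [norm_smul, hθ, mul_one, Real.norm_of_nonneg hρ.le]
  simp only [hnorm, real_inner_smul_left, real_inner_smul_right, ← mul_assoc,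
    mul_right_comm 2 R ρ]
  have hnonpos : ρ ^ 2 + 2 * ρ * ⟪y, θ⟫ - 2 * ρ * R ∉ Ioi 0 := by
    rw [mem_Ioi, not_lt]
    nlinarith
  have hψ_zero := image_eq_zero_of_notMem_tsupport fun h ↦ hnonpos (hψ0 h)
  have hψ'_zero := image_eq_zero_of_notMem_tsupport fun h ↦
    hnonpos (hψ0 (tsupport_deriv_subset h))
  rw [integral_sphere_sub_inner_mul_comp_inner hE R y hθ
      (g := fun u ↦ deriv (deriv ψ) (ρ ^ 2 + 2 * ρ * ⟪y, θ⟫ - 2 * ρ * R * u)) (by fun_prop),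
    integral_sub_mul_deriv_deriv_comp hψ R ⟪y, θ⟫ _ (by positivity), hψ_zero, hψ'_zero,
    radialKernel, show ρ ^ 2 + 2 * ρ * ⟪y, θ⟫ + 2 * ρ * R =
      1 * ρ ^ 2 + 2 * (R + ⟪y, θ⟫) * ρ by ring]
  field_simp
  ring

theorem integral_sphere_mul_integral_comp_norm_sq_sub {S : E → ℝ} (hS : Continuous S)
    (hSc : HasCompactSupport S) {φ : ℝ → ℝ} (hφ : Continuous φ)
    {a : Metric.sphere (0 : E) 1 → ℝ} (ha : Continuous a) (R : ℝ) (y : E) :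
    ∫ v : Metric.sphere (0 : E) 1,
        a v * (∫ z, S (R • (v : E) + z) * φ (‖z‖ ^ 2 - ‖R • (v : E) - y‖ ^ 2)) ∂volume.toSphere =
      ∫ z, S (y + z) * ∫ v : Metric.sphere (0 : E) 1,
        a v * φ (‖z‖ ^ 2 + 2 * ⟪y, z⟫ - 2 * R * ⟪z, (v : E)⟫) ∂volume.toSphere := by
  have norm_sq_shift (v z : E) : ‖y - R • v + z‖ ^ 2 - ‖R • v - y‖ ^ 2 =
      ‖z‖ ^ 2 + 2 * ⟪y, z⟫ - 2 * R * ⟪z, v⟫ := by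
    rw [norm_add_sq_real, ← norm_neg (R • v - y), neg_sub, inner_sub_left, real_inner_smul_left,
      real_inner_comm z v]
    ring
  have translate (v : E) : ∫ z, S (R • v + z) * φ (‖z‖ ^ 2 - ‖R • v - y‖ ^ 2) =
      ∫ z, S (y + z) * φ (‖z‖ ^ 2 + 2 * ⟪y, z⟫ - 2 * R * ⟪z, v⟫) := by
    rw [← integral_add_left_eq_self _ (y - R • v)]
    simp only [norm_sq_shift, add_sub_cancel, ← add_assoc]
  simp only [translate, ← integral_const_mul]
  rw [integral_integral_swap_of_hasCompactSupport (by fun_prop)]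
  · simp only [mul_left_comm]
  · refine .intro (isCompact_univ.prod (hSc.comp_homeomorph (Homeomorph.addLeft y)).isCompact) ?_
    intro q hq
    have hz : S (y + q.2) = 0 :=
      image_eq_zero_of_notMem_tsupport (f := S ∘ Homeomorph.addLeft y) fun h ↦ hq ⟨trivial, h⟩
    simp [Function.uncurry, hz]

theorem integral_sphere_mul_integral_sqDeriv_sqDeriv_kirchhoff (hE : Module.finrank ℝ E = 3)
    {S : E → ℝ} {R : ℝ} (hS : ContDiff ℝ 2 S)
    (hSR : Function.support S ⊆ Metric.closedBall 0 R) {ψ : ℝ → ℝ} (hψ : ContDiff ℝ 2 ψ)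
    (hψc : HasCompactSupport ψ) (hψ0 : tsupport ψ ⊆ Ioi 0) {y : E} (hy : y ∈ Metric.ball 0 R) :
    ∫ v : Metric.sphere (0 : E) 1, (R - ⟪y, (v : E)⟫) *
        (∫ s, ψ s * sqDeriv (sqDeriv (kirchhoff S (R • (v : E)))) √(‖R • (v : E) - y‖ ^ 2 + s))
        ∂volume.toSphere =
      ∫ θ : Metric.sphere (0 : E) 1,
        (∫ ρ in Ioi (0 : ℝ), S (y + ρ • (θ : E)) * radialKernel ψ R ⟪y, (θ : E)⟫ 1 ρ)
        ∂volume.toSphere := by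
  have hyR : ‖y‖ < R := mem_ball_zero_iff.mp hy
  have hR : 0 < R := (norm_nonneg y).trans_lt hyR
  have hSc : HasCompactSupport S :=
    .of_support_subset_isCompact (isCompact_closedBall 0 R) hSR
  have : Nontrivial E := Module.nontrivial_of_finrank_pos (R := ℝ) (by rw [hE]; norm_num)
  have hψ'' : Continuous (deriv (deriv ψ)) := (hψ.deriv' (n := 1)).continuous_deriv_one
  simp only [integral_mul_sqDeriv_sqDeriv_kirchhoff hE hS hSc hψ hψc hψ0 _ (sq_nonneg _),
    mul_left_comm _ (2 * π)⁻¹, integral_const_mul]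
  rw [integral_sphere_mul_integral_comp_norm_sq_sub hS.continuous hSc hψ'' (by fun_prop) R y,
    integral_eq_integral_sphere_integral_Ioi, hE, ← integral_const_mul]
  · refine integral_congr_ae (.of_forall fun θ ↦ ?_)
    refine (integral_const_mul _ _).symm.trans ?_
    refine setIntegral_congr_fun measurableSet_Ioi fun ρ (hρ : 0 < ρ) ↦ ?_
    by_cases hyρ : ‖y + ρ • (θ : E)‖ ≤ R
    · have hθ : ‖(θ : E)‖ = 1 := norm_eq_of_mem_sphere θ
      simp only [integral_sphere_deriv_deriv_eq_radialKernel hE hψ hψ0 hR y hθ hρ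
        (add_two_mul_inner_le hθ hyR.le hyρ), Nat.reduceSub]
      field_simp
    · have hzero : S (y + ρ • (θ : E)) = 0 :=
        Function.notMem_support.mp fun h ↦ hyρ (mem_closedBall_zero_iff.mp (hSR h))
      simp only [hzero, zero_mul, mul_zero]
  · have hinner : Continuous fun z : E ↦ ∫ v : Metric.sphere (0 : E) 1, (R - ⟪y, (v : E)⟫) *
        deriv (deriv ψ) (‖z‖ ^ 2 + 2 * ⟪y, z⟫ - 2 * R * ⟪z, (v : E)⟫) ∂volume.toSphere :=
      continuous_integral_of_compactSpace (by fun_prop)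
    exact Continuous.integrable_of_hasCompactSupport (by fun_prop)
      (hSc.comp_homeomorph (Homeomorph.addLeft y)).mul_right

end WeakIdentity

section RadialKernel

open Set

variable {ψ : ℝ → ℝ} {R β ε κ M : ℝ}

theorem radialKernel_comp_inv_mul (hε : ε ≠ 0) :
    radialKernel (fun s ↦ ψ (ε⁻¹ * s)) R β 1 (ε * κ) = radialKernel ψ R β ε κ := by
  have harg : ε⁻¹ * (1 * (ε * κ) ^ 2 + 2 * (R + β) * (ε * κ)) =
      ε * κ ^ 2 + 2 * (R + β) * κ := by
    field_simp
  simp only [radialKernel, deriv_comp_mul_left, smul_eq_mul, harg]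
  field_simp

theorem radialKernel_eq_zero (h : ε * κ ^ 2 + 2 * (R + β) * κ ∉ tsupport ψ) :
    radialKernel ψ R β ε κ = 0 := by
  rw [radialKernel, image_eq_zero_of_notMem_tsupport h,
    image_eq_zero_of_notMem_tsupport fun h' ↦ h (tsupport_deriv_subset h')]
  ring

theorem radialKernel_eq_zero_of_lt {δ : ℝ} (hψM : tsupport ψ ⊆ Iio M) (hε : 0 ≤ ε) (hδ : 0 < δ)
    (hβ : δ ≤ R + β) (hκ : 0 ≤ κ) (hMκ : M / (2 * δ) < κ) : radialKernel ψ R β ε κ = 0 := by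
  refine radialKernel_eq_zero fun h ↦ (mem_Iio.mp (hψM h)).not_ge ?_
  calc M ≤ 2 * δ * κ := by rw [mul_comm]; exact ((div_lt_iff₀ (by positivity)).mp hMκ).le
    _ ≤ 2 * (R + β) * κ := by gcongr
    _ ≤ ε * κ ^ 2 + 2 * (R + β) * κ := le_add_of_nonneg_left (by positivity)

theorem setIntegral_Icc_mul_radialKernel {δ : ℝ} (hψM : tsupport ψ ⊆ Iio M) (hε : 0 ≤ ε)
    (hδ : 0 < δ) (hβ : δ ≤ R + β) (f : ℝ → ℝ) :
    ∫ κ in Icc 0 (M / (2 * δ)), f κ * radialKernel ψ R β ε κ =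
      ∫ κ in Ioi 0, f κ * radialKernel ψ R β ε κ := by
  rw [integral_Icc_eq_integral_Ioc]
  refine (setIntegral_eq_of_subset_of_forall_sdiff_eq_zero measurableSet_Ioi Ioc_subset_Ioi_self
    fun κ ⟨(hκ : 0 < κ), hκM⟩ ↦ ?_).symm
  have hMκ : M / (2 * δ) < κ := not_le.mp fun h ↦ hκM ⟨hκ, h⟩
  rw [radialKernel_eq_zero_of_lt hψM hε hδ hβ hκ.le hMκ, mul_zero]

theorem setIntegral_tsupport_mul_comp_abs (hψ0 : tsupport ψ ⊆ Ioi 0) (hε : 0 ≤ ε) (g : ℝ → ℝ) :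
    ∫ s in tsupport ψ, ψ s * g |ε * s| = ∫ s, ψ s * g (ε * s) := by
  have hzero (s : ℝ) (hs : s ∉ tsupport ψ) : ψ s * g (ε * s) = 0 := by
    rw [image_eq_zero_of_notMem_tsupport hs, zero_mul]
  rw [← setIntegral_eq_integral_of_forall_compl_eq_zero hzero]
  refine setIntegral_congr_fun (isClosed_tsupport ψ).measurableSet fun s hs ↦ ?_
  simp only [abs_of_nonneg (mul_nonneg hε (hψ0 hs).le)]

theorem integral_id_mul_deriv (hψ : ContDiff ℝ 1 ψ) (hψc : HasCompactSupport ψ) :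
    ∫ κ, κ * deriv ψ κ = -∫ κ, ψ κ := by
  have : Continuous (deriv ψ) := hψ.continuous_deriv_one
  have h := integral_mul_deriv_eq_deriv_mul_of_integrable (u := id) (u' := 1)
    (fun κ _ ↦ hasDerivAt_id κ) (fun κ _ ↦ (hψ.differentiable one_ne_zero κ).hasDerivAt)
    (Continuous.integrable_of_hasCompactSupport (by fun_prop) hψc.deriv.mul_left)
    (Continuous.integrable_of_hasCompactSupport (by fun_prop) hψc.mul_left)
    (Continuous.integrable_of_hasCompactSupport (by fun_prop) hψc.mul_left)
  simpa using h

theorem setIntegral_Ioi_radialKernel_zero (hψ : ContDiff ℝ 1 ψ) (hψc : HasCompactSupport ψ)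
    (hψ0 : tsupport ψ ⊆ Ioi 0) (hR : R ≠ 0) (hβ : 0 < R + β) :
    ∫ κ in Ioi 0, radialKernel ψ R β 0 κ = -(∫ s, ψ s) / (8 * R ^ 2) := by
  set c : ℝ := 2 * (R + β) with hc
  have hc0 : 0 < c := by positivity
  set χ : ℝ → ℝ := fun κ ↦ ψ (c * κ)
  have hχ : ContDiff ℝ 1 χ := by fun_prop
  have : Continuous (deriv χ) := hχ.continuous_deriv_one
  have hχc : HasCompactSupport χ := hψc.comp_homeomorph (Homeomorph.mulLeft₀ c hc0.ne')
  have hkernel (κ : ℝ) : radialKernel ψ R β 0 κ =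
      (4 * R)⁻¹ * (κ * deriv χ κ) - β / (4 * R ^ 2) * χ κ := by
    simp only [radialKernel, χ, zero_mul, zero_add, ← hc, deriv_comp_mul_left, smul_eq_mul]
    linear_combination (-κ * deriv ψ (c * κ) / (4 * R)) * hc
  have hint₁ : Integrable fun κ ↦ (4 * R)⁻¹ * (κ * deriv χ κ) :=
    (Continuous.integrable_of_hasCompactSupport (by fun_prop) hχc.deriv.mul_left).const_mul _
  have hint₀ : Integrable fun κ ↦ β / (4 * R ^ 2) * χ κ :=
    (hχ.continuous.integrable_of_hasCompactSupport hχc).const_mul _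
  have hsupport : ∫ κ in Ioi 0, radialKernel ψ R β 0 κ = ∫ κ, radialKernel ψ R β 0 κ :=
    setIntegral_eq_integral_of_forall_compl_eq_zero fun κ (hκ : ¬0 < κ) ↦
      radialKernel_eq_zero fun h ↦ hκ (by simpa [hβ] using hψ0 h)
  rw [hsupport, funext hkernel, integral_sub hint₁ hint₀, integral_const_mul, integral_const_mul,
    integral_id_mul_deriv hχ hχc, Measure.integral_comp_mul_left, smul_eq_mul,
    abs_of_pos (inv_pos.mpr hc0), hc]
  field_simp
  ring

end RadialKernel

section Concentration

open Set

variable {E : Type*} [NormedAddCommGroup E] [InnerProductSpace ℝ E] {R : ℝ} {y : E}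

theorem norm_smul_sphere_sub_pos (hy : y ∈ Metric.ball 0 R) (v : Metric.sphere (0 : E) 1) :
    0 < ‖R • (v : E) - y‖ := by
  rw [norm_pos_iff, sub_ne_zero]
  rintro rfl
  have hR : |R| < R := by simpa [norm_smul] using hy
  exact hR.not_ge (le_abs_self R)

theorem sub_norm_le_add_inner (R : ℝ) (y : E) (θ : Metric.sphere (0 : E) 1) :
    R - ‖y‖ ≤ R + ⟪y, (θ : E)⟫ := by
  have h := neg_le_of_abs_le (abs_real_inner_le_norm y (θ : E))
  rw [norm_eq_of_mem_sphere, mul_one] at h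
  linarith

variable [FiniteDimensional ℝ E] [MeasurableSpace E] [BorelSpace E] {S : E → ℝ} {ψ : ℝ → ℝ}

theorem integral_sphere_mul_integral_sqDeriv_sqDeriv_kirchhoff_of_pos
    (hE : Module.finrank ℝ E = 3) (hS : ContDiff ℝ 2 S)
    (hSR : Function.support S ⊆ Metric.closedBall 0 R) (hψ : ContDiff ℝ 2 ψ)
    (hψc : HasCompactSupport ψ) (hψ0 : tsupport ψ ⊆ Ioi 0) (hy : y ∈ Metric.ball 0 R) {ε : ℝ}
    (hε : 0 < ε) :
    ∫ v : Metric.sphere (0 : E) 1, (R - ⟪y, (v : E)⟫) * (∫ s,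
        ψ s * sqDeriv (sqDeriv (kirchhoff S (R • (v : E)))) √(‖R • (v : E) - y‖ ^ 2 + ε * s))
        ∂volume.toSphere =
      ∫ θ : Metric.sphere (0 : E) 1,
        (∫ κ in Ioi (0 : ℝ), S (y + (ε * κ) • (θ : E)) * radialKernel ψ R ⟪y, (θ : E)⟫ ε κ)
        ∂volume.toSphere := by
  have hdil0 : tsupport (fun s ↦ ψ (ε⁻¹ * s)) ⊆ Ioi 0 := fun s hs ↦ by
    have : 0 < ε⁻¹ * s :=
      hψ0 (tsupport_comp_subset_preimage ψ (f := fun s ↦ ε⁻¹ * s) (by fun_prop) hs)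
    exact pos_of_mul_pos_right this (by positivity)
  have hdilc : HasCompactSupport fun s ↦ ψ (ε⁻¹ * s) :=
    hψc.comp_homeomorph (Homeomorph.mulLeft₀ ε⁻¹ (inv_ne_zero hε.ne'))
  have left_dilation (x : E) (c : ℝ) : ∫ s, ψ s * sqDeriv (sqDeriv (kirchhoff S x)) √(c + ε * s) =
      ε⁻¹ * ∫ s, ψ (ε⁻¹ * s) * sqDeriv (sqDeriv (kirchhoff S x)) √(c + s) := by
    have h := Measure.integral_comp_mul_left
      (fun s ↦ ψ (ε⁻¹ * s) * sqDeriv (sqDeriv (kirchhoff S x)) √(c + s)) ε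
    simpa only [inv_mul_cancel_left₀ hε.ne', abs_of_pos (inv_pos.mpr hε), smul_eq_mul] using h
  have right_dilation (θ : E) :
      ∫ κ in Ioi 0, S (y + (ε * κ) • θ) * radialKernel ψ R ⟪y, θ⟫ ε κ =
      ε⁻¹ * ∫ ρ in Ioi 0, S (y + ρ • θ) * radialKernel (fun s ↦ ψ (ε⁻¹ * s)) R ⟪y, θ⟫ 1 ρ := by
    have h := integral_comp_mul_left_Ioi
      (fun ρ ↦ S (y + ρ • θ) * radialKernel (fun s ↦ ψ (ε⁻¹ * s)) R ⟪y, θ⟫ 1 ρ) 0 hε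
    simpa only [radialKernel_comp_inv_mul hε.ne', mul_zero, smul_eq_mul] using h
  simp only [left_dilation, right_dilation, mul_left_comm _ ε⁻¹, integral_const_mul]
  rw [integral_sphere_mul_integral_sqDeriv_sqDeriv_kirchhoff hE hS hSR (by fun_prop) hdilc hdil0
    hy]

-- The absolute value keeps the argument of the square root positive for every real `ε`.
theorem continuous_integral_sphere_mul_integral_sqDeriv_sqDeriv_kirchhoff (hS : ContDiff ℝ 2 S)
    (hψ : Continuous ψ) (hψc : HasCompactSupport ψ) (hy : y ∈ Metric.ball 0 R) :
    Continuous fun ε : ℝ ↦ ∫ v : Metric.sphere (0 : E) 1, (R - ⟪y, (v : E)⟫) *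
      (∫ s in tsupport ψ, ψ s *
        sqDeriv (sqDeriv (kirchhoff S (R • (v : E)))) √(‖R • (v : E) - y‖ ^ 2 + |ε * s|))
        ∂volume.toSphere := by
  have hfield : Continuous fun q : (ℝ × Metric.sphere (0 : E) 1) × ℝ ↦
      sqDeriv (sqDeriv (kirchhoff S (R • (q.1.2 : E))))
        √(‖R • (q.1.2 : E) - y‖ ^ 2 + |q.1.1 * q.2|) :=
    (continuousOn_sqDeriv_sqDeriv_kirchhoff hS).comp_continuous
      (f := fun q : (ℝ × Metric.sphere (0 : E) 1) × ℝ ↦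
        (R • (q.1.2 : E), √(‖R • (q.1.2 : E) - y‖ ^ 2 + |q.1.1 * q.2|)))
      (by fun_prop) fun q ↦ (Real.sqrt_pos.mpr (add_pos_of_pos_of_nonneg
        (pow_pos (norm_smul_sphere_sub_pos hy q.1.2) 2) (abs_nonneg _))).ne'
  simp only [← integral_const_mul]
  exact continuous_integral_setIntegral_of_compactSpace hψc.isCompact (by fun_prop)

theorem continuous_integral_sphere_integral_mul_radialKernel (hS : Continuous S)
    (hψ : ContDiff ℝ 1 ψ) (R K : ℝ) (y : E) :
    Continuous fun ε : ℝ ↦ ∫ θ : Metric.sphere (0 : E) 1,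
      (∫ κ in Icc 0 K, S (y + (ε * κ) • (θ : E)) * radialKernel ψ R ⟪y, (θ : E)⟫ ε κ)
        ∂volume.toSphere := by
  have : Continuous (deriv ψ) := hψ.continuous_deriv_one
  refine continuous_integral_setIntegral_of_compactSpace isCompact_Icc ?_
  unfold radialKernel
  fun_prop

theorem integral_sphere_mul_integral_sqDeriv_sqDeriv_kirchhoff_of_nonneg
    (hE : Module.finrank ℝ E = 3) (hS : ContDiff ℝ 2 S)
    (hSR : Function.support S ⊆ Metric.closedBall 0 R) (hψ : ContDiff ℝ 2 ψ) {M : ℝ}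
    (hψM : tsupport ψ ⊆ Ioo 0 M) (hy : y ∈ Metric.ball 0 R) {ε : ℝ} (hε : 0 ≤ ε) :
    ∫ v : Metric.sphere (0 : E) 1, (R - ⟪y, (v : E)⟫) * (∫ s,
        ψ s * sqDeriv (sqDeriv (kirchhoff S (R • (v : E)))) √(‖R • (v : E) - y‖ ^ 2 + ε * s))
        ∂volume.toSphere =
      ∫ θ : Metric.sphere (0 : E) 1,
        (∫ κ in Ioi (0 : ℝ), S (y + (ε * κ) • (θ : E)) * radialKernel ψ R ⟪y, (θ : E)⟫ ε κ)
        ∂volume.toSphere := by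
  have hψ0 : tsupport ψ ⊆ Ioi 0 := hψM.trans Ioo_subset_Ioi_self
  have hψc : HasCompactSupport ψ := .of_support_subset_isCompact isCompact_Icc
    ((subset_tsupport ψ).trans (hψM.trans Ioo_subset_Icc_self))
  have hyR : 0 < R - ‖y‖ := sub_pos.mpr (mem_ball_zero_iff.mp hy)
  have localize_left {ε : ℝ} (hε : 0 ≤ ε) (v : E) := setIntegral_tsupport_mul_comp_abs hψ0 hε
    fun s ↦ sqDeriv (sqDeriv (kirchhoff S (R • v))) √(‖R • v - y‖ ^ 2 + s)
  have localize_right {ε : ℝ} (hε : 0 ≤ ε) (θ : Metric.sphere (0 : E) 1) :=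
    setIntegral_Icc_mul_radialKernel (hψM.trans Ioo_subset_Iio_self) hε hyR
      (sub_norm_le_add_inner R y θ) fun κ ↦ S (y + (ε * κ) • (θ : E))
  have hclosure := EqOn.closure (s := Ioi 0) (fun ε (hε : 0 < ε) ↦ ?_)
    (continuous_integral_sphere_mul_integral_sqDeriv_sqDeriv_kirchhoff hS hψ.continuous hψc hy)
    (continuous_integral_sphere_integral_mul_radialKernel hS.continuous (hψ.of_le one_le_two) R
      (M / (2 * (R - ‖y‖))) y)
    (closure_Ioi (0 : ℝ) ▸ mem_Ici.mpr hε)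
  · simpa only [localize_left hε, localize_right hε] using hclosure
  · simpa only [localize_left hε.le, localize_right hε.le] using
      integral_sphere_mul_integral_sqDeriv_sqDeriv_kirchhoff_of_pos hE hS hSR hψ hψc hψ0 hy hε

theorem exists_contDiff_tsupport_subset_Ioo_integral_eq_one :
    ∃ ψ : ℝ → ℝ, ContDiff ℝ 2 ψ ∧ tsupport ψ ⊆ Ioo 0 1 ∧ ∫ s, ψ s = 1 := by
  let bump : ContDiffBump (1 / 2 : ℝ) := ⟨1 / 8, 1 / 4, by norm_num, by norm_num⟩
  refine ⟨bump.normed volume, bump.contDiff_normed (n := 2), ?_, bump.integral_normed⟩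
  rw [bump.tsupport_normed_eq, Real.closedBall_eq_Icc]
  exact Icc_subset_Ioo (by norm_num [bump]) (by norm_num [bump])

theorem integral_sphere_mul_sqDeriv_sqDeriv_kirchhoff (hE : Module.finrank ℝ E = 3)
    (hS : ContDiff ℝ 2 S) (hSR : Function.support S ⊆ Metric.closedBall 0 R)
    (hy : y ∈ Metric.ball 0 R) :
    ∫ v : Metric.sphere (0 : E) 1, (R - ⟪y, (v : E)⟫) *
        sqDeriv (sqDeriv (kirchhoff S (R • (v : E)))) ‖R • (v : E) - y‖ ∂volume.toSphere =
      -π / (2 * R ^ 2) * S y := by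
  obtain ⟨ψ, hψ, hψ01, hψ_integral⟩ := exists_contDiff_tsupport_subset_Ioo_integral_eq_one
  have hyR : 0 < R - ‖y‖ := sub_pos.mpr (mem_ball_zero_iff.mp hy)
  have hR : R ≠ 0 := (Metric.pos_of_mem_ball hy).ne'
  have hψc : HasCompactSupport ψ := .of_support_subset_isCompact isCompact_Icc
    ((subset_tsupport ψ).trans (hψ01.trans Ioo_subset_Icc_self))
  have hray (θ : Metric.sphere (0 : E) 1) :=
    setIntegral_Ioi_radialKernel_zero (hψ.of_le one_le_two) hψc (hψ01.trans Ioo_subset_Ioi_self)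
      hR (hyR.trans_le (sub_norm_le_add_inner R y θ))
  have hlimit := integral_sphere_mul_integral_sqDeriv_sqDeriv_kirchhoff_of_nonneg hE hS hSR hψ
    hψ01 hy le_rfl
  simp only [zero_mul, add_zero, zero_smul, Real.sqrt_sq (norm_nonneg _), integral_mul_const,
    integral_const_mul, hψ_integral, one_mul, hray] at hlimit
  rw [hlimit, integral_const, toSphere_real_univ_of_finrank_eq_three hE, smul_eq_mul]
  field_simp
  ring

end Concentration

theorem near_field_reconstruction_3d_general {E : Type*} [NormedAddCommGroup E]
    [InnerProductSpace ℝ E] [FiniteDimensional ℝ E] [MeasurableSpace E] [BorelSpace E]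
    (hE : Module.finrank ℝ E = 3) {R : ℝ} {S : E → ℝ} (hS : ContDiff ℝ 2 S)
    (hSR : Function.support S ⊆ Metric.closedBall 0 R) {y : E} (hy : y ∈ Metric.ball 0 R) :
    S y = ∫ ω : Metric.sphere (0 : E) 1, R ^ 2 *
      (⟪R • (ω : E) - y, (ω : E)⟫ / (2 * π * ‖R • (ω : E) - y‖ ^ 2) *
        (deriv (kirchhoff S (R • (ω : E))) ‖R • (ω : E) - y‖ / ‖R • (ω : E) - y‖ -
          deriv (deriv (kirchhoff S (R • (ω : E)))) ‖R • (ω : E) - y‖)) ∂volume.toSphere := by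
  have hR : R ≠ 0 := (Metric.pos_of_mem_ball hy).ne'
  have integrand_eq (ω : Metric.sphere (0 : E) 1) :
      R ^ 2 * (⟪R • (ω : E) - y, (ω : E)⟫ / (2 * π * ‖R • (ω : E) - y‖ ^ 2) *
        (deriv (kirchhoff S (R • (ω : E))) ‖R • (ω : E) - y‖ / ‖R • (ω : E) - y‖ -
          deriv (deriv (kirchhoff S (R • (ω : E)))) ‖R • (ω : E) - y‖)) =
      -(2 * R ^ 2) / π * ((R - ⟪y, (ω : E)⟫) *
        sqDeriv (sqDeriv (kirchhoff S (R • (ω : E)))) ‖R • (ω : E) - y‖) := by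
    have hr := (norm_smul_sphere_sub_pos hy ω).ne'
    rw [sqDeriv_sqDeriv hr (hasDerivAt_deriv_kirchhoff hS _ _).differentiableAt, inner_sub_left,
      real_inner_smul_left, real_inner_self_eq_norm_sq, norm_eq_of_mem_sphere]
    field_simp
    ring
  simp only [integrand_eq]
  rw [integral_const_mul, integral_sphere_mul_sqDeriv_sqDeriv_kirchhoff hE hS hSR hy]
  field_simp

/-- **Time-domain near-field reconstruction in 3D** (Theorem 2.2, indicator form).
Let `S : ℝ³ → ℝ` be smooth with compact support contained in the open ball `B_R(0)`,
and let `p(x,t) = (t/(4π)) ∫_{S²} S(x + tω) dσ(ω)` be the Kirchhoff solution of the wave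
equation with zero initial value and initial velocity `S`. Then for every `y ∈ B_R(0)`,
`S(y) = ∫_{∂B_R(0)} ((x−y)·ν_x)/(2π|x−y|²) · ( ∂_t p(x,|x−y|)/|x−y| − ∂_{tt} p(x,|x−y|) ) ds(x)`,
where the surface integral over the sphere of radius `R` is parametrized as `x = Rω`
with surface element `R² dσ(ω)` and outward unit normal `ν_x = ω`. -/
theorem near_field_reconstruction_3d (R : ℝ) (hR : 0 < R)
    (σ : Measure (Metric.sphere (0 : EuclideanSpace ℝ (Fin 3)) 1))
    (hσ : σ = (volume : Measure (EuclideanSpace ℝ (Fin 3))).toSphere)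
    (S : EuclideanSpace ℝ (Fin 3) → ℝ)
    (hS : ContDiff ℝ (⊤ : ℕ∞) S) (hsupp : HasCompactSupport S)
    (hsub : tsupport S ⊆ Metric.ball (0 : EuclideanSpace ℝ (Fin 3)) R)
    (p : EuclideanSpace ℝ (Fin 3) → ℝ → ℝ)
    (hp : ∀ x t, p x t = (t / (4 * π)) *
      ∫ ω : Metric.sphere (0 : EuclideanSpace ℝ (Fin 3)) 1,
        S (x + t • (ω : EuclideanSpace ℝ (Fin 3))) ∂σ)
    (y : EuclideanSpace ℝ (Fin 3))
    (hy : y ∈ Metric.ball (0 : EuclideanSpace ℝ (Fin 3)) R) :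
    S y = ∫ ω : Metric.sphere (0 : EuclideanSpace ℝ (Fin 3)) 1,
      (R ^ 2 : ℝ) *
        ((⟪R • (ω : EuclideanSpace ℝ (Fin 3)) - y, (ω : EuclideanSpace ℝ (Fin 3))⟫ /
            (2 * π * ‖R • (ω : EuclideanSpace ℝ (Fin 3)) - y‖ ^ 2)) *
          (deriv (p (R • (ω : EuclideanSpace ℝ (Fin 3))))
              ‖R • (ω : EuclideanSpace ℝ (Fin 3)) - y‖ /
              ‖R • (ω : EuclideanSpace ℝ (Fin 3)) - y‖ -
            deriv (deriv (p (R • (ω : EuclideanSpace ℝ (Fin 3)))))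
              ‖R • (ω : EuclideanSpace ℝ (Fin 3)) - y‖)) ∂σ := by
  subst hσ
  obtain rfl : p = kirchhoff S := funext fun x ↦ funext (hp x)
  exact near_field_reconstruction_3d_general finrank_euclideanSpace_fin
    (contDiff_infty.mp hS 2)
    ((subset_tsupport S).trans (hsub.trans Metric.ball_subset_closedBall)) hy
end
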